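/- arXiv:2507.05821 — 5 statements merged into one kernel-verified Lean document; each statement's English description precedes it below -/
import Mathlib

section
/- Let X be a connected 5-regular simple graph and let G be a group of automorphisms of X acting transitively on the arcs of X such that the stabilizer in G of each vertex is a solvable group. Then for every edge uv of X, the only element of G that fixes u, fixes v, and fixes every neighbor of u and every neighbor of v is the identity. -/
open SimpleGraph

/-!
A solvable transitive permutation group of prime degree `p` is affine over `𝔽_p`, so the stabilizer
`G_v` acts on the neighbors of `v` primitively and by maps `x ↦ k x + b`.

Let `S` assign to each edge a subgroup fixing that edge, compatibly with conjugation. If an element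
that fixes `y` and moves a neighbor of `y` centralizes every `S(y, w)`, then so does a subgroup of
`G_y` transitive on the neighbors of `y`; hence `S(y, w)` does not depend on `w`, by
arc-transitivity and connectedness `S` is constant, and its value fixes every vertex, so is trivial.
Applied to the derived subgroups of the pointwise stabilizers of balls, this shows that some ball
has a trivial pointwise stabilizer. Therefore the arc stabilizer `G_uv` is finite, and it is a
`2`-group because the linear parts `k` have order dividing `p - 1 = 2 ^ r`.

Put `Z_uv = Ω₁(Z(G_uv))` and suppose that the kernel `G_u^{[1]} ∩ G_v^{[1]}` is not trivial. Then
`Z_uv` fixes every ball about `u` pointwise. For radius `1` this is the argument above with `S` the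
family of kernels. If `a ∈ Z_uv` fixes the ball of radius `n ≥ 1` and moves a neighbor of a vertex
`y` on its boundary, let `W` be generated by the `Z_yw`. It is elementary abelian and centralized by
`a` up to index `2`: an involution fixing a neighbor of `u` acts around `u` either trivially or as
the reflection in that neighbor. The same is true of a conjugate `b` of `a` under `G_y` that acts
around `y` as a reflection in another point, so `(a b) ^ 24` centralizes `W` while acting around `y`
as a nontrivial translation, and `Z` is trivial by the argument above. Hence `Z_uv = 1` always, so
the `2`-group `G_uv` is trivial, a contradiction.
-/

open MulAction Subgroup
open scoped Pointwise IsMulCommutative Nat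

theorem mulAut_pow_factorial_index_eq_one {A : Type*} [CommGroup A] (C : Subgroup A)
    [C.FiniteIndex] (α : MulAut A) (hα : ∀ c ∈ C, α c = c) : α ^ C.index ! = 1 := by
  -- Each coset of the range of `δ` is `α`-invariant and has at most `C.index` elements.
  let δ : A →* A := α.toMonoidHom / MonoidHom.id A
  have hker : C ≤ δ.ker := fun c hc ↦ by simp [δ, MonoidHom.mem_ker, hα c hc]
  have hdvd : Nat.card δ.range ∣ C.index := index_ker δ ▸ index_dvd_of_le hker
  have : Finite δ.range :=
    Nat.finite_of_card_ne_zero (ne_zero_of_dvd_ne_zero FiniteIndex.index_ne_zero hdvd)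
  ext x
  have hcoset (y : A) : α y / x ∈ δ.range ↔ y / x ∈ δ.range := by
    have : α y / x = δ y * (y / x) := by simp [δ]
    rw [this, mul_mem_cancel_left (MonoidHom.mem_range.mpr ⟨y, rfl⟩)]
  let σ := (MulAut.toPerm A α).subtypePerm (p := (· / x ∈ δ.range)) hcoset
  have hσ : σ ^ C.index ! = 1 := by
    have e : {y : A // y / x ∈ δ.range} ≃ δ.range :=
      (Equiv.divRight x).subtypeEquiv fun _ ↦ Iff.rfl
    have := Finite.of_equiv _ e.symm
    refine orderOf_dvd_iff_pow_eq_one.mp <| (orderOf_dvd_natCard σ).trans ?_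
    rw [Nat.card_perm, Nat.card_congr e]
    exact Nat.factorial_dvd_factorial
      (Nat.le_of_dvd (Nat.pos_of_ne_zero FiniteIndex.index_ne_zero) hdvd)
  have hpow := (Equiv.Perm.subtypePerm_pow (MulAut.toPerm A α) _ hcoset).symm.trans hσ
  simp only [← map_pow] at hpow
  exact congrArg Subtype.val (DFunLike.congr_fun hpow ⟨x, by simp⟩)

theorem pow_factorial_relIndex_mem_centralizer {G : Type*} [Group G] {W : Subgroup G}
    [IsMulCommutative W] {f : G} (hf : f ∈ normalizer (W : Set G))
    (hindex : (centralizer {f}).relIndex W ≠ 0) :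
    f ^ ((centralizer {f}).relIndex W)! ∈ centralizer (W : Set G) := by
  let C := (centralizer {f}).subgroupOf W
  have : C.FiniteIndex := ⟨hindex⟩
  have hpow := mulAut_pow_factorial_index_eq_one C (W.normalizerMonoidHom ⟨f, hf⟩) fun c hc ↦ by
    have hcf : (c : G) * f = f * c := mem_centralizer_singleton_iff.mp (mem_subgroupOf.mp hc)
    exact Subtype.ext (mul_inv_eq_iff_eq_mul.mpr hcf.symm)
  rw [← map_pow, ← MonoidHom.mem_ker, normalizerMonoidHom_ker] at hpow
  exact mem_subgroupOf.mp hpow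

theorem exists_normal_isMulCommutative_ne_bot (Γ : Type*) [Group Γ] [Nontrivial Γ]
    [Group.IsSolvable Γ] : ∃ N : Subgroup Γ, N.Normal ∧ IsMulCommutative N ∧ N ≠ ⊥ := by
  classical
  have hsolv := Group.IsSolvable.solvable (G := Γ)
  obtain ⟨k, hk⟩ : ∃ k, Nat.find hsolv = k + 1 :=
    Nat.exists_eq_succ_of_ne_zero fun h0 ↦ top_ne_bot ((Nat.find_eq_zero hsolv).mp h0)
  refine ⟨derivedSeries Γ k, derivedSeries_normal Γ k, ?_,
    Nat.find_min hsolv (hk ▸ Nat.lt_succ_self k)⟩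
  rw [← le_centralizer_iff_isMulCommutative, ← commutator_eq_bot_iff_le_centralizer,
    ← derivedSeries_succ, ← hk]
  exact Nat.find_spec hsolv

theorem addAut_zmod_apply {n : ℕ} (β : AddAut (ZMod n)) (i : ZMod n) :
    β i = ((ZMod.AddAutEquivUnits n β).toMul : ZMod n) * i := by
  conv_lhs => rw [← (ZMod.AddAutEquivUnits n).symm_apply_apply β]
  simp [Units.smul_def]

/-- The bijection `e` identifies `α` with the ring `F` in such a way that every element of `Γ` acts
on `α` as an affine map `x ↦ k * x + b` with `k` a unit. -/
def IsAffineChart (Γ : Type*) {α F : Type*} [Group Γ] [MulAction Γ α] [Ring F] (e : α ≃ F) :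
    Prop :=
  ∀ g : Γ, ∃ (k : Fˣ) (b : F), ∀ x, e (g • x) = k * e x + b

theorem bijective_smul_of_isMulCommutative (N : Type*) {α : Type*} [Group N] [IsMulCommutative N]
    [MulAction N α] [FaithfulSMul N α] [IsPretransitive N α] (x : α) :
    Function.Bijective fun n : N ↦ n • x := by
  refine ⟨fun m n hmn ↦ FaithfulSMul.eq_of_smul_eq_smul (α := α) fun y ↦ ?_,
    fun y ↦ exists_smul_eq N x y⟩
  obtain ⟨l, rfl⟩ := exists_smul_eq N x y
  rw [smul_smul, smul_smul, mul_comm', mul_comm' n, mul_smul, mul_smul]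
  exact congrArg (l • ·) hmn

theorem exists_isAffineChart_of_normal {Γ α : Type*} [Group Γ] [MulAction Γ α]
    [FaithfulSMul Γ α] {p : ℕ} [Fact p.Prime] (hcard : Nat.card α = p) (N : Subgroup Γ) [N.Normal]
    [IsMulCommutative N] [IsPretransitive N α] : ∃ e : α ≃ ZMod p, IsAffineChart Γ e := by
  have : Nonempty α := (Nat.card_pos_iff.mp (hcard ▸ (Fact.out : p.Prime).pos)).1
  obtain ⟨o⟩ := this
  let θ : N ≃ α := Equiv.ofBijective _ (bijective_smul_of_isMulCommutative N o)
  let E : Multiplicative (ZMod p) ≃* N :=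
    mulEquivOfPrimeCardEq (p := p) (by simp) (by rw [Nat.card_congr θ, hcard])
  let τ : ZMod p ≃ α := Multiplicative.ofAdd.trans (E.toEquiv.trans θ)
  refine ⟨τ.symm, fun g ↦ ?_⟩
  let β : AddAut (ZMod p) := AddEquiv.toMultiplicative.symm
    ((E.trans (MulAut.conjNormal g)).trans E.symm)
  have hτ (i : ZMod p) : τ i = E (Multiplicative.ofAdd i) • o := rfl
  have hτ_add (i j : ZMod p) : τ (i + j) = E (Multiplicative.ofAdd i) • τ j := by
    rw [hτ, hτ, ofAdd_add, map_mul, mul_smul]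
  have hβ (i : ZMod p) : ((E (Multiplicative.ofAdd (β i)) : N) : Γ) =
      g * E (Multiplicative.ofAdd i) * g⁻¹ := by
    change ((E (E.symm (MulAut.conjNormal g (E (Multiplicative.ofAdd i)))) : N) : Γ) = _
    rw [E.apply_symm_apply, MulAut.conjNormal_apply]
  refine ⟨(ZMod.AddAutEquivUnits p β).toMul, τ.symm (g • o), fun x ↦ ?_⟩
  obtain ⟨i, rfl⟩ := τ.surjective x
  rw [Equiv.symm_apply_apply, ← addAut_zmod_apply, Equiv.symm_apply_eq, hτ_add,
    Equiv.apply_symm_apply, smul_def, hβ, smul_smul, inv_mul_cancel_right, mul_smul]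
  rfl

theorem exists_isAffineChart_of_isSolvable (Γ : Type*) {α : Type*} [Group Γ] [MulAction Γ α]
    [IsPretransitive Γ α] [Group.IsSolvable Γ] {p : ℕ} [hp : Fact p.Prime]
    (hcard : Nat.card α = p) : ∃ e : α ≃ ZMod p, IsAffineChart Γ e := by
  have := Nat.finite_of_card_ne_zero (hcard ▸ hp.out.ne_zero)
  have : Nontrivial α := Finite.one_lt_card_iff_nontrivial.mp (hcard ▸ hp.out.one_lt)
  let Q := (toPermHom Γ α).range
  have hQ (g : Γ) : ∃ q : Q, ∀ x : α, q • x = g • x := ⟨⟨_, g, rfl⟩, fun _ ↦ rfl⟩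
  have : Group.IsSolvable Q :=
    Group.isSolvable_of_surjective (toPermHom Γ α).rangeRestrict_surjective
  have : IsPretransitive Q α := ⟨fun x y ↦
    let ⟨g, hg⟩ := exists_smul_eq Γ x y
    let ⟨q, hq⟩ := hQ g
    ⟨q, (hq x).trans hg⟩⟩
  have : IsPreprimitive Q α := .of_prime_card (hcard ▸ hp.out)
  have : Nontrivial Q := by
    obtain ⟨x, y, hxy⟩ := exists_pair_ne α
    obtain ⟨q, hq⟩ := exists_smul_eq Q x y
    exact ⟨q, 1, fun h ↦ hxy (by rw [← hq, h, one_smul])⟩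
  obtain ⟨N, hnormal, hcomm, hN⟩ := exists_normal_isMulCommutative_ne_bot Q
  have : IsPretransitive N α := by
    refine IsQuasiPreprimitive.isPretransitive_of_normal fun hfix ↦ hN ?_
    refine (eq_bot_iff_forall N).mpr fun n hn ↦ FaithfulSMul.eq_of_smul_eq_smul fun x : α ↦ ?_
    rw [one_smul]
    exact (hfix ▸ Set.mem_univ x : x ∈ fixedPoints N α) ⟨n, hn⟩
  obtain ⟨e, he⟩ := exists_isAffineChart_of_normal hcard N
  refine ⟨e, fun g ↦ ?_⟩
  obtain ⟨q, hq⟩ := hQ g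
  simpa only [hq] using he q

namespace IsAffineChart

variable {Γ α F : Type*} [Group Γ] [MulAction Γ α] [Field F] {e : α ≃ F}

theorem exists_pow_smul_eq (he : IsAffineChart Γ e) {g : Γ} {x : α} (hx : g • x = x) :
    ∃ k : Fˣ, ∀ (n : ℕ) (z : α), e (g ^ n • z) = e x + k ^ n * (e z - e x) := by
  obtain ⟨k, b, hg⟩ := he g
  have hb : b = e x - k * e x := eq_sub_of_add_eq' (by rw [← hg, hx])
  refine ⟨k, fun n z ↦ ?_⟩
  induction n with
  | zero => simp
  | succ n ih =>
    rw [pow_succ', mul_smul, hg, ih, hb]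
    ring

theorem pow_card_sub_one_smul [Fintype F] (he : IsAffineChart Γ e) {g : Γ} {x : α}
    (hx : g • x = x) (z : α) : g ^ (Fintype.card F - 1) • z = z := by
  obtain ⟨k, hk⟩ := he.exists_pow_smul_eq hx
  apply e.injective
  rw [hk, FiniteField.pow_card_sub_one_eq_one _ k.ne_zero]
  ring

theorem smul_eq_reflection (he : IsAffineChart Γ e) {g : Γ} {x t : α} (hx : g • x = x)
    (ht : g ^ 2 • t = t) (hgt : g • t ≠ t) (z : α) : e (g • z) = 2 * e x - e z := by
  obtain ⟨k, hk⟩ := he.exists_pow_smul_eq hx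
  have hk1 (z : α) : e (g • z) = e x + k * (e z - e x) := by simpa only [pow_one] using hk 1 z
  have htx : e t - e x ≠ 0 := sub_ne_zero.mpr fun h ↦ hgt (e.injective h ▸ hx)
  have hsq : (k : F) ^ 2 = 1 := by
    have := hk 2 t
    rw [ht] at this
    exact mul_right_cancel₀ htx (by linear_combination -this)
  have hne : (k : F) ≠ 1 := fun h ↦ hgt <| e.injective <| by rw [hk1, h]; ring
  rw [hk1, (sq_eq_one_iff.mp hsq).resolve_left hne]
  ring

theorem mul_pow_smul_ne (he : IsAffineChart Γ e) {g h : Γ} {x y s t : α}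
    (hgx : g • x = x) (hgs : g ^ 2 • s = s) (hgs' : g • s ≠ s)
    (hhy : h • y = y) (hht : h ^ 2 • t = t) (hht' : h • t ≠ t) (hxy : x ≠ y)
    {n : ℕ} (hn : (2 * n : F) ≠ 0) (z : α) : (g * h) ^ n • z ≠ z := by
  have htrans (m : ℕ) : e ((g * h) ^ m • z) = e z + 2 * m * (e x - e y) := by
    induction m with
    | zero => simp
    | succ m ih =>
      rw [pow_succ', mul_smul, mul_smul, he.smul_eq_reflection hgx hgs hgs',
        he.smul_eq_reflection hhy hht hht', ih]
      push_cast
      ring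
  intro hz
  have := htrans n
  rw [hz, left_eq_add, mul_eq_zero] at this
  exact this.elim hn (sub_ne_zero.mpr (e.injective.ne hxy))

end IsAffineChart

section Subgroups

variable {G : Type*} [Group G]

theorem conj_smul_eq_iff_mem_normalizer {H : Subgroup G} {g : G} :
    MulAut.conj g • H = H ↔ g ∈ normalizer (H : Set G) := by
  rw [mem_normalizer_iff_conj_image_eq, ← SetLike.coe_set_eq]
  rfl

theorem mulAut_smul_centralizer (ψ : MulAut G) (s : Set G) :
    ψ • centralizer s = centralizer (ψ • s) := by
  have hle (ψ : MulAut G) (s : Set G) : ψ • centralizer s ≤ centralizer (ψ • s) :=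
    map_centralizer_le_centralizer_image s (MulDistribMulAction.toMonoidEnd _ G ψ)
  refine (hle ψ s).antisymm ?_
  rw [subset_pointwise_smul_iff]
  simpa only [inv_smul_smul] using hle ψ⁻¹ (ψ • s)

/-- The `k`-th term of the derived series of `H`, as a subgroup of the ambient group. -/
def derivedSubgroup (H : Subgroup G) : ℕ → Subgroup G
  | 0 => H
  | k + 1 => ⁅derivedSubgroup H k, derivedSubgroup H k⁆

theorem derivedSubgroup_mono {H K : Subgroup G} (h : H ≤ K) :
    ∀ k, derivedSubgroup H k ≤ derivedSubgroup K k
  | 0 => h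
  | k + 1 => commutator_mono (derivedSubgroup_mono h k) (derivedSubgroup_mono h k)

theorem derivedSubgroup_le (H : Subgroup G) : ∀ k, derivedSubgroup H k ≤ H
  | 0 => le_rfl
  | k + 1 => (commutator_le_self _).trans (derivedSubgroup_le H k)

theorem mulAut_smul_derivedSubgroup (ψ : MulAut G) (H : Subgroup G) :
    ∀ k, ψ • derivedSubgroup H k = derivedSubgroup (ψ • H) k
  | 0 => rfl
  | k + 1 => by
    rw [derivedSubgroup, derivedSubgroup, ← mulAut_smul_derivedSubgroup ψ H k]
    exact map_commutator _ _ _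

theorem map_subtype_derivedSeries (H : Subgroup G) :
    ∀ k, (derivedSeries H k).map H.subtype = derivedSubgroup H k
  | 0 => by rw [derivedSeries_zero, ← MonoidHom.range_eq_map, range_subtype, derivedSubgroup]
  | k + 1 => by
    rw [derivedSeries_succ, map_commutator, map_subtype_derivedSeries H k, derivedSubgroup]

theorem exists_derivedSubgroup_eq_bot (H : Subgroup G) [Group.IsSolvable H] :
    ∃ k, derivedSubgroup H k = ⊥ := by
  obtain ⟨k, hk⟩ := Group.IsSolvable.solvable (G := H)
  exact ⟨k, by rw [← map_subtype_derivedSeries, hk, Subgroup.map_bot]⟩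

/-- The subgroup `Ω₁(Z(H))` of the central elements of `H` whose square is `1`. -/
def centralInvolutions (H : Subgroup G) : Subgroup G where
  carrier := {x | x ∈ H ∧ x ∈ centralizer (H : Set G) ∧ x ^ 2 = 1}
  one_mem' := ⟨one_mem _, one_mem _, one_pow 2⟩
  mul_mem' := fun {x y} ⟨hx, hxc, hx2⟩ ⟨hy, hyc, hy2⟩ ↦
    ⟨mul_mem hx hy, mul_mem hxc hyc, by
      rw [Commute.mul_pow (mem_centralizer_iff.mp hyc x hx), hx2, hy2, one_mul]⟩
  inv_mem' := fun ⟨hx, hxc, hx2⟩ ↦ ⟨inv_mem hx, inv_mem hxc, by rw [inv_pow, hx2, inv_one]⟩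

theorem mem_centralInvolutions {H : Subgroup G} {x : G} :
    x ∈ centralInvolutions H ↔ x ∈ H ∧ x ∈ centralizer (H : Set G) ∧ x ^ 2 = 1 :=
  Iff.rfl

theorem centralInvolutions_le (H : Subgroup G) : centralInvolutions H ≤ H :=
  fun _ hx ↦ hx.1

theorem mulAut_smul_centralInvolutions (ψ : MulAut G) (H : Subgroup G) :
    ψ • centralInvolutions H = centralInvolutions (ψ • H) := by
  ext x
  rw [mem_pointwise_smul_iff_inv_smul_mem, mem_centralInvolutions, mem_centralInvolutions,
    coe_pointwise_smul, ← mulAut_smul_centralizer, mem_pointwise_smul_iff_inv_smul_mem,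
    mem_pointwise_smul_iff_inv_smul_mem, ← smul_pow', smul_eq_iff_eq_inv_smul, smul_one]

theorem centralInvolutions_ne_bot {H : Subgroup G} [Finite H] (hH : IsPGroup 2 H) (hne : H ≠ ⊥) :
    centralInvolutions H ≠ ⊥ := by
  have : Nontrivial H := (nontrivial_iff_ne_bot H).mpr hne
  have hZ : Nontrivial (center H) := hH.center_nontrivial
  obtain ⟨z, hz⟩ := exists_prime_orderOf_dvd_card' 2 <|
    ((hH.to_subgroup (center H)).card_eq_or_dvd).resolve_left (Finite.one_lt_card).ne'
  refine ne_bot_iff_exists_ne_one.mpr ⟨⟨((z : H) : G), z.1.2, ?_, ?_⟩, fun h ↦ ?_⟩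
  · exact mem_centralizer_iff.mpr fun h hh ↦
      congrArg Subtype.val (mem_center_iff.mp z.2 ⟨h, hh⟩)
  · have hz2 : z ^ 2 = 1 := hz ▸ pow_orderOf_eq_one z
    exact congrArg (fun c : center H ↦ ((c : H) : G)) hz2
  · have hz1 : ((z : H) : G) = 1 := congrArg (fun c : centralInvolutions H ↦ (c : G)) h
    have hz1' : z = 1 := Subtype.ext (Subtype.ext hz1)
    simp [hz1'] at hz

theorem relIndex_centralizer_conj {W : Subgroup G} {a g : G} (hg : g ∈ normalizer (W : Set G)) :
    (centralizer {MulAut.conj g a}).relIndex W = (centralizer {a}).relIndex W := by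
  rw [← conj_smul_eq_iff_mem_normalizer] at hg
  rw [← relIndex_pointwise_smul (MulAut.conj g) (centralizer {a}) W, hg, mulAut_smul_centralizer,
    Set.smul_set_singleton, MulAut.smul_def]

theorem mul_pow_mem_centralizer {W : Subgroup G} [IsMulCommutative W] {a b : G}
    (ha : a ∈ normalizer (W : Set G)) (hb : b ∈ normalizer (W : Set G))
    (haW : (centralizer {a}).relIndex W ∣ 2) (hbW : (centralizer {b}).relIndex W ∣ 2) :
    (a * b) ^ 24 ∈ centralizer (W : Set G) := by
  -- `a * b` centralizes a subgroup of index at most `4` in `W`, and `24 = 4!`.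
  have hle : centralizer {a} ⊓ centralizer {b} ≤ centralizer {a * b} := fun x ⟨hxa, hxb⟩ ↦
    mem_centralizer_singleton_iff.mpr (Commute.mul_right
      (mem_centralizer_singleton_iff.mp hxa) (mem_centralizer_singleton_iff.mp hxb))
  have hne : (centralizer {a} ⊓ centralizer {b}).relIndex W ≠ 0 :=
    relIndex_inf_ne_zero (ne_zero_of_dvd_ne_zero two_ne_zero haW)
      (ne_zero_of_dvd_ne_zero two_ne_zero hbW)
  have hdvd := relIndex_dvd_of_le_left W hle
  have hfour : (centralizer {a * b}).relIndex W ≤ 4 :=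
    calc _ ≤ (centralizer {a} ⊓ centralizer {b}).relIndex W :=
          Nat.le_of_dvd (Nat.pos_of_ne_zero hne) hdvd
      _ ≤ (centralizer {a}).relIndex W * (centralizer {b}).relIndex W := relIndex_inf_le
      _ ≤ 2 * 2 := Nat.mul_le_mul (Nat.le_of_dvd two_pos haW) (Nat.le_of_dvd two_pos hbW)
  obtain ⟨c, hc⟩ : ((centralizer {a * b}).relIndex W)! ∣ 24 := Nat.factorial_dvd_factorial hfour
  rw [hc, pow_mul]
  exact pow_mem (pow_factorial_relIndex_mem_centralizer (mul_mem ha hb)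
    (ne_zero_of_dvd_ne_zero hne hdvd)) c

end Subgroups

section GraphActions

variable {V G : Type*} [Group G] [MulAction G V] {X : SimpleGraph V}

/-- The action of `G` on the vertices of `X` is by graph automorphisms. -/
class PreservesAdj (G : Type*) {V : Type*} [Group G] [MulAction G V] (X : SimpleGraph V) :
    Prop where
  adj_smul_iff (g : G) (u v : V) : X.Adj (g • u) (g • v) ↔ X.Adj u v

/-- The action of `G` on `X` is by graph automorphisms and transitive on arcs. -/
class ArcTransitive (G : Type*) {V : Type*} [Group G] [MulAction G V] (X : SimpleGraph V) : Prop
    extends PreservesAdj G X where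
  exists_smul_eq_smul_eq {u v u' v' : V} :
    X.Adj u v → X.Adj u' v' → ∃ g : G, g • u = u' ∧ g • v = v'

/-- A vertex stabilizer acts on the neighbors of the vertex. -/
instance neighborSetMulAction [PreservesAdj G X] (y : V) :
    MulAction (stabilizer G y) (X.neighborSet y) where
  smul g z := ⟨(g : G) • (z : V), by
    simpa only [mem_neighborSet, mem_stabilizer_iff.mp g.2] using
      (PreservesAdj.adj_smul_iff (g : G) y z).mpr z.2⟩
  one_smul z := Subtype.ext (one_smul G (z : V))
  mul_smul g h z := Subtype.ext (mul_smul (g : G) (h : G) (z : V))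

instance isPretransitive_neighborSet [ArcTransitive G X] (y : V) :
    IsPretransitive (stabilizer G y) (X.neighborSet y) where
  exists_smul_eq z w :=
    let ⟨g, hgy, hgz⟩ := ArcTransitive.exists_smul_eq_smul_eq (G := G) z.2 w.2
    ⟨⟨g, hgy⟩, Subtype.ext hgz⟩

theorem dist_smul_smul [PreservesAdj G X] (g : G) (u v : V) :
    X.dist (g • u) (g • v) = X.dist u v := by
  have hle (h : G) (a b : V) : X.edist (h • a) (h • b) ≤ X.edist a b := by
    let f : X →g X := ⟨(h • ·), fun {a b} hab ↦ (PreservesAdj.adj_smul_iff h a b).mpr hab⟩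
    exact le_iInf fun p ↦ (edist_le (p.map f)).trans_eq (by rw [Walk.length_map])
  refine congrArg ENat.toNat ((hle g u v).antisymm ?_)
  simpa only [inv_smul_smul] using hle g⁻¹ (g • u) (g • v)

theorem exists_adj_dist_eq_of_dist_eq_succ {u t : V} {n : ℕ} (h : X.dist u t = n + 1) :
    ∃ y, X.Adj y t ∧ X.dist u y = n := by
  have hr : X.Reachable t u := (Reachable.of_dist_ne_zero (by omega)).symm
  obtain ⟨p, hp⟩ := hr.exists_walk_length_eq_dist
  cases p with
  | nil => simp at h
  | @cons _ y _ hty q =>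
    refine ⟨y, hty.symm, ?_⟩
    have hle : X.dist y u ≤ n := by
      have := dist_le q
      rw [Walk.length_cons, dist_comm, h] at hp
      omega
    have := hty.symm.diff_dist_adj (u := u)
    rw [dist_comm] at hle
    omega

variable (X G) in
/-- The subgroup, written `G_x^{[m]}` in the literature, of the elements of `G` that fix every
vertex of the connected graph `X` at distance at most `m` from `x`. -/
def ballFixator (x : V) (m : ℕ) : Subgroup G :=
  fixingSubgroup G {z | X.dist x z ≤ m}

theorem mem_ballFixator {x : V} {m : ℕ} {g : G} :
    g ∈ ballFixator G X x m ↔ ∀ z, X.dist x z ≤ m → g • z = z :=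
  mem_fixingSubgroup_iff G

theorem mem_ballFixator_one (hconn : X.Connected) {x : V} {g : G} :
    g ∈ ballFixator G X x 1 ↔ g • x = x ∧ ∀ w, X.Adj x w → g • w = w := by
  refine mem_ballFixator.trans ⟨fun h ↦ ⟨h x (by simp), fun w hw ↦ h w ?_⟩, fun h z hz ↦ ?_⟩
  · exact (dist_eq_one_iff_adj.mpr hw).le
  · rcases Nat.le_one_iff_eq_zero_or_eq_one.mp hz with h0 | h1
    · exact hconn.dist_eq_zero_iff.mp h0 ▸ h.1
    · exact h.2 z (dist_eq_one_iff_adj.mp h1)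

theorem ballFixator_le_ballFixator (hconn : X.Connected) {x y : V} {m n : ℕ}
    (h : X.dist x y + m ≤ n) : ballFixator G X x n ≤ ballFixator G X y m :=
  fixingSubgroup_antitone G V fun _ hz ↦
    hconn.dist_triangle.trans ((Nat.add_le_add_left hz _).trans h)

theorem ballFixator_le_stabilizer (x y : V) {m : ℕ} (h : X.dist x y ≤ m) :
    ballFixator G X x m ≤ stabilizer G y :=
  fun _ hg ↦ mem_ballFixator.mp hg y h

theorem conj_smul_stabilizer (g : G) (x : V) :
    MulAut.conj g • stabilizer G x = stabilizer G (g • x) :=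
  (stabilizer_smul_eq_stabilizer_map_conj g x).symm

theorem conj_smul_ballFixator [PreservesAdj G X] (g : G) (x : V) (m : ℕ) :
    MulAut.conj g • ballFixator G X x m = ballFixator G X (g • x) m := by
  have hball : g • {z | X.dist x z ≤ m} = {z | X.dist (g • x) z ≤ m} := by
    ext z
    rw [Set.mem_smul_set_iff_inv_smul_mem, Set.mem_ofPred_eq, Set.mem_ofPred_eq,
      ← dist_smul_smul g x, smul_inv_smul]
  exact SubMulAction.fixingSubgroup_map_conj_eq hball

theorem eq_one_of_forall_mem_ballFixator [FaithfulSMul G V] {x : V} {g : G}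
    (h : ∀ m, g ∈ ballFixator G X x m) : g = 1 :=
  FaithfulSMul.eq_of_smul_eq_smul fun z : V ↦
    (mem_ballFixator.mp (h _) z le_rfl).trans (one_smul G z).symm

theorem exists_adj_smul_ne_of_notMem_ballFixator {u : V} {n : ℕ} {g : G}
    (hg : g ∈ ballFixator G X u n) (hg' : g ∉ ballFixator G X u (n + 1)) :
    ∃ y t, X.Adj y t ∧ X.dist u y = n ∧ g • t ≠ t := by
  obtain ⟨t, htn, hgt⟩ : ∃ t, X.dist u t ≤ n + 1 ∧ g • t ≠ t := by
    simpa only [mem_ballFixator, not_forall, exists_prop] using hg'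
  have hut : X.dist u t = n + 1 :=
    htn.antisymm (not_le.mp fun h ↦ hgt (mem_ballFixator.mp hg t h))
  obtain ⟨y, hyt, huy⟩ := exists_adj_dist_eq_of_dist_eq_succ hut
  exact ⟨y, t, hyt, huy, hgt⟩

theorem connected_induction (hconn : X.Connected) {P : V → Prop} {u : V} (hu : P u)
    (hadj : ∀ v w, X.Adj v w → P v → P w) (v : V) : P v := by
  obtain ⟨p⟩ := hconn u v
  induction p with
  | nil => exact hu
  | cons h _ ih => exact ih (hadj _ _ h hu)

theorem exists_adj_smul_ne [FaithfulSMul G V] (hconn : X.Connected) {u : V} {g : G}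
    (hgu : g • u = u) (hg : g ≠ 1) : ∃ y t, X.Adj y t ∧ g • y = y ∧ g • t ≠ t := by
  by_contra! hfix
  exact hg <| FaithfulSMul.eq_of_smul_eq_smul fun z : V ↦
    (connected_induction (P := fun z ↦ g • z = z) hconn hgu hfix z).trans (one_smul G z).symm

theorem finite_setOf_dist_le (hconn : X.Connected) (hfin : ∀ v, (X.neighborSet v).Finite) (u : V)
    (m : ℕ) : {z | X.dist u z ≤ m}.Finite := by
  induction m with
  | zero =>
    exact (Set.finite_singleton u).subset fun z hz ↦
      (hconn.dist_eq_zero_iff.mp (Nat.le_zero.mp hz)).symm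
  | succ m ih =>
    refine (ih.union (ih.biUnion fun y _ ↦ hfin y)).subset fun z hz ↦ ?_
    rcases Nat.le_succ_iff.mp hz with hle | heq
    · exact .inl hle
    · obtain ⟨y, hyz, huy⟩ := exists_adj_dist_eq_of_dist_eq_succ heq
      exact .inr (Set.mem_biUnion (Set.mem_ofPred_eq ▸ huy.le) hyz)

variable (G) in
/-- A family of vertex-fixing subgroups of `G` indexed by unordered pairs of vertices and
equivariant under conjugation; it is only evaluated at edges. -/
structure IsEdgeFamily (S : V → V → Subgroup G) : Prop where
  symm (u v : V) : S u v = S v u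
  conj_smul (g : G) (u v : V) : MulAut.conj g • S u v = S (g • u) (g • v)
  le_stabilizer (u v : V) : S u v ≤ stabilizer G u

variable (X) in
/-- The subgroup generated by the members of an edge family at the edges through `y`. -/
def starJoin (S : V → V → Subgroup G) (y : V) : Subgroup G :=
  ⨆ w ∈ X.neighborSet y, S y w

omit [MulAction G V] in
theorem le_starJoin (S : V → V → Subgroup G) {y w : V} (h : X.Adj y w) : S y w ≤ starJoin X S y :=
  le_iSup₂_of_le w h le_rfl

namespace IsEdgeFamily

variable {S : V → V → Subgroup G}

theorem conj_smul_starJoin [PreservesAdj G X] (hS : IsEdgeFamily G S) (g : G) (y : V) :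
    MulAut.conj g • starJoin X S y = starJoin X S (g • y) := by
  apply le_antisymm
  · rw [pointwise_smul_subset_iff]
    refine iSup₂_le fun w hw ↦ ?_
    rw [← pointwise_smul_subset_iff, hS.conj_smul]
    exact le_starJoin S ((PreservesAdj.adj_smul_iff g y w).mpr hw)
  · refine iSup₂_le fun w hw ↦ ?_
    have hw' : X.Adj y (g⁻¹ • w) := by
      rwa [← PreservesAdj.adj_smul_iff g, smul_inv_smul]
    calc S (g • y) w = MulAut.conj g • S y (g⁻¹ • w) := by rw [hS.conj_smul, smul_inv_smul]
      _ ≤ MulAut.conj g • starJoin X S y := smul_mono_right _ (le_starJoin S hw')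

theorem stabilizer_le_normalizer_starJoin [PreservesAdj G X] (hS : IsEdgeFamily G S) (y : V) :
    stabilizer G y ≤ normalizer (starJoin X S y : Set G) := fun g hg ↦ by
  rw [← conj_smul_eq_iff_mem_normalizer, hS.conj_smul_starJoin, mem_stabilizer_iff.mp hg]

theorem eq_bot_of_eq_bot [ArcTransitive G X] (hS : IsEdgeFamily G S) {u v u' v' : V}
    (huv : X.Adj u v) (huv' : X.Adj u' v') (hbot : S u v = ⊥) : S u' v' = ⊥ := by
  obtain ⟨g, rfl, rfl⟩ := ArcTransitive.exists_smul_eq_smul_eq (G := G) huv huv'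
  rw [← hS.conj_smul, hbot, smul_bot]

theorem eq_bot_of_forall_eq [FaithfulSMul G V] [ArcTransitive G X] (hconn : X.Connected)
    (hS : IsEdgeFamily G S) {y t : V} (hyt : X.Adj y t) (heq : ∀ w, X.Adj y w → S y w = S y t)
    {u v : V} (huv : X.Adj u v) : S u v = ⊥ := by
  have heq_everywhere {a b c : V} (hab : X.Adj a b) (hac : X.Adj a c) : S a c = S a b := by
    obtain ⟨g, rfl, rfl⟩ := ArcTransitive.exists_smul_eq_smul_eq (G := G) hyt hab
    have hc : X.Adj y (g⁻¹ • c) := by rwa [← PreservesAdj.adj_smul_iff g, smul_inv_smul]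
    rw [← hS.conj_smul, ← heq _ hc, hS.conj_smul, smul_inv_smul]
  have hconst : ∀ z, (∀ w, X.Adj z w → S z w = S u v) ∧ S u v ≤ stabilizer G z := by
    refine connected_induction hconn ⟨fun w ↦ heq_everywhere huv, hS.le_stabilizer u v⟩ ?_
    rintro a b hab ⟨ha, -⟩
    have hba : S b a = S u v := by rw [hS.symm, ha b hab]
    exact ⟨fun w hbw ↦ (heq_everywhere hab.symm hbw).trans hba, hba ▸ hS.le_stabilizer b a⟩
  refine (eq_bot_iff_forall _).mpr fun g hg ↦ FaithfulSMul.eq_of_smul_eq_smul fun z : V ↦ ?_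
  rw [one_smul]
  exact (hconst z).2 hg

theorem eq_bot_of_mem_centralizer_starJoin [FaithfulSMul G V] [ArcTransitive G X]
    (hconn : X.Connected) (hS : IsEdgeFamily G S) {y t : V}
    [IsQuasiPreprimitive (stabilizer G y) (X.neighborSet y)] {c : G}
    (hc : c ∈ centralizer (starJoin X S y : Set G)) (hcy : c • y = y) (hyt : X.Adj y t)
    (hct : c • t ≠ t) {u v : V} (huv : X.Adj u v) : S u v = ⊥ := by
  refine hS.eq_bot_of_forall_eq hconn hyt (fun w hyw ↦ ?_) huv
  let N := (centralizer (starJoin X S y : Set G)).subgroupOf (stabilizer G y)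
  have : N.Normal := normal_subgroupOf_of_le_normalizer fun g hg ↦ by
    rw [← conj_smul_eq_iff_mem_normalizer, mulAut_smul_centralizer, ← coe_pointwise_smul,
      hS.conj_smul_starJoin, mem_stabilizer_iff.mp hg]
  have : IsPretransitive N (X.neighborSet y) := by
    refine IsQuasiPreprimitive.isPretransitive_of_normal fun hfix ↦ hct ?_
    have := (hfix ▸ Set.mem_univ (⟨t, hyt⟩ : X.neighborSet y) :) ⟨⟨c, hcy⟩, hc⟩
    exact congrArg Subtype.val this
  obtain ⟨⟨⟨n, hny⟩, hn⟩, hnt⟩ := exists_smul_eq N (⟨t, hyt⟩ : X.neighborSet y) ⟨w, hyw⟩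
  have hnormalizes : MulAut.conj n • S y t = S y t :=
    conj_smul_eq_iff_mem_normalizer.mpr <| centralizer_le_normalizer _ <|
      centralizer_le (le_starJoin S hyt) (mem_subgroupOf.mp hn)
  rw [← hnormalizes, hS.conj_smul, mem_stabilizer_iff.mp hny]
  exact congrArg (S y) (congrArg Subtype.val hnt).symm

theorem derivedSubgroup (hS : IsEdgeFamily G S) (k : ℕ) :
    IsEdgeFamily G fun u v ↦ _root_.derivedSubgroup (S u v) k where
  symm u v := by rw [hS.symm]
  conj_smul g u v := by rw [mulAut_smul_derivedSubgroup, hS.conj_smul]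
  le_stabilizer u v := (derivedSubgroup_le _ k).trans (hS.le_stabilizer u v)

theorem centralInvolutions (hS : IsEdgeFamily G S) :
    IsEdgeFamily G fun u v ↦ _root_.centralInvolutions (S u v) where
  symm u v := by rw [hS.symm]
  conj_smul g u v := by rw [mulAut_smul_centralInvolutions, hS.conj_smul]
  le_stabilizer u v := (centralInvolutions_le _).trans (hS.le_stabilizer u v)

end IsEdgeFamily

theorem isEdgeFamily_inf_ballFixator [PreservesAdj G X] (m : ℕ) :
    IsEdgeFamily G fun u v ↦ ballFixator G X u m ⊓ ballFixator G X v m where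
  symm u v := inf_comm _ _
  conj_smul g u v := by rw [smul_inf, conj_smul_ballFixator, conj_smul_ballFixator]
  le_stabilizer u v := inf_le_left.trans (ballFixator_le_stabilizer u u (by simp))

variable (G) in
/-- The subgroup of the elements of `G` that fix both `u` and `v`. -/
def arcStabilizer (u v : V) : Subgroup G :=
  stabilizer G u ⊓ stabilizer G v

theorem isEdgeFamily_arcStabilizer : IsEdgeFamily G (arcStabilizer (V := V) G) where
  symm u v := inf_comm _ _
  conj_smul g u v := by
    rw [arcStabilizer, smul_inf, conj_smul_stabilizer, conj_smul_stabilizer, arcStabilizer]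
  le_stabilizer u v := inf_le_left

theorem ballFixator_one_le_arcStabilizer {u v : V} (huv : X.Adj u v) :
    ballFixator G X u 1 ≤ arcStabilizer G u v :=
  le_inf (ballFixator_le_stabilizer u u (by simp))
    (ballFixator_le_stabilizer u v (dist_eq_one_iff_adj.mpr huv).le)

theorem exists_ballFixator_eq_bot [FaithfulSMul G V] [ArcTransitive G X]
    [∀ y, IsQuasiPreprimitive (stabilizer G y) (X.neighborSet y)] (hconn : X.Connected) (u : V)
    [Group.IsSolvable (stabilizer G u)] : ∃ m, ballFixator G X u m = ⊥ := by
  classical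
  have hex : ∃ k m, derivedSubgroup (ballFixator G X u m) k = ⊥ := by
    obtain ⟨k, hk⟩ := exists_derivedSubgroup_eq_bot (stabilizer G u)
    exact ⟨k, 0, le_bot_iff.mp <|
      hk ▸ derivedSubgroup_mono (ballFixator_le_stabilizer u u (by simp)) k⟩
  -- If the least such `k` is positive, then the `(k - 1)`-st derived subgroups are nontrivial at
  -- every radius, and the one at radius `m` centralizes those at all larger radii.
  obtain ⟨m, hm⟩ := Nat.find_spec hex
  rcases hk : Nat.find hex with _ | k
  · exact ⟨m, by rwa [hk] at hm⟩
  have hne (n : ℕ) : derivedSubgroup (ballFixator G X u n) k ≠ ⊥ := fun h ↦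
    Nat.find_min hex (hk ▸ Nat.lt_succ_self k) ⟨n, h⟩
  rw [hk, derivedSubgroup, commutator_eq_bot_iff_le_centralizer] at hm
  obtain ⟨c, hc, hc1⟩ := (bot_or_exists_ne_one _).resolve_left (hne m)
  have hcu : c • u = u :=
    ballFixator_le_stabilizer u u (by simp) (derivedSubgroup_le _ k hc)
  obtain ⟨y, t, hyt, hcy, hct⟩ := exists_adj_smul_ne hconn hcu hc1
  let M := X.dist y u + m
  let S (v w : V) := derivedSubgroup (ballFixator G X v M ⊓ ballFixator G X w M) k
  have hcS : c ∈ centralizer (starJoin X S y : Set G) := by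
    refine centralizer_le (iSup₂_le fun w _ ↦ ?_ : starJoin X S y ≤ _) (hm hc)
    exact derivedSubgroup_mono
      (inf_le_left.trans (ballFixator_le_ballFixator hconn le_rfl)) k
  have hS : IsEdgeFamily G S := (isEdgeFamily_inf_ballFixator M).derivedSubgroup k
  have hbot : S y t = ⊥ := hS.eq_bot_of_mem_centralizer_starJoin hconn hcS hcy hyt hct hyt
  have hle : ballFixator G X u (X.dist u y + X.dist u t + M) ≤
      ballFixator G X y M ⊓ ballFixator G X t M :=
    le_inf (ballFixator_le_ballFixator hconn (by omega))
      (ballFixator_le_ballFixator hconn (by omega))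
  exact absurd (le_bot_iff.mp ((derivedSubgroup_mono hle k).trans_eq hbot)) (hne _)

section LocallyAffine

variable {F : Type*} [Field F]

theorem pow_mem_ballFixator_one [Fintype F] [PreservesAdj G X] (hconn : X.Connected) {y z : V}
    {e : X.neighborSet y ≃ F} (he : IsAffineChart (stabilizer G y) e) (hyz : X.Adj y z) {g : G}
    (hg : g ∈ arcStabilizer G y z) : g ^ (Fintype.card F - 1) ∈ ballFixator G X y 1 := by
  refine (mem_ballFixator_one hconn).mpr ⟨pow_mem hg.1 _, fun w hyw ↦ ?_⟩
  have hz : (⟨g, hg.1⟩ : stabilizer G y) • (⟨z, hyz⟩ : X.neighborSet y) = ⟨z, hyz⟩ :=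
    Subtype.ext hg.2
  exact congrArg Subtype.val (he.pow_card_sub_one_smul hz ⟨w, hyw⟩)

theorem exists_adj_mem_arcStabilizer (hconn : X.Connected) {u v y : V} (huv : X.Adj u v) {g : G}
    (hg : g ∈ ballFixator G X u (X.dist u y)) (hgv : g • v = v) :
    ∃ x, X.Adj y x ∧ g ∈ arcStabilizer G y x := by
  have hgy : g • y = y := mem_ballFixator.mp hg y le_rfl
  rcases hm : X.dist u y with _ | m
  · obtain rfl := hconn.dist_eq_zero_iff.mp hm
    exact ⟨v, huv, hgy, hgv⟩
  · obtain ⟨x, hxy, hux⟩ := exists_adj_dist_eq_of_dist_eq_succ hm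
    exact ⟨x, hxy.symm, hgy, mem_ballFixator.mp hg x (by omega)⟩

theorem pow_mem_ballFixator [Fintype F] [PreservesAdj G X] (hconn : X.Connected)
    (hchart : ∀ y, ∃ e : X.neighborSet y ≃ F, IsAffineChart (stabilizer G y) e) {u v : V}
    (huv : X.Adj u v) {g : G} (hg : g ∈ arcStabilizer G u v) (m : ℕ) :
    g ^ (Fintype.card F - 1) ^ m ∈ ballFixator G X u m := by
  induction m with
  | zero =>
    refine mem_ballFixator.mpr fun z hz ↦ ?_
    obtain rfl := hconn.dist_eq_zero_iff.mp (Nat.le_zero.mp hz)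
    exact pow_mem hg.1 _
  | succ m ih =>
    rw [pow_succ, pow_mul]
    by_contra hnot
    obtain ⟨y, t, hyt, rfl, hmoved⟩ :=
      exists_adj_smul_ne_of_notMem_ballFixator (pow_mem ih _) hnot
    obtain ⟨x, hyx, hx⟩ := exists_adj_mem_arcStabilizer hconn huv ih (pow_mem hg.2 _)
    obtain ⟨e, he⟩ := hchart y
    exact hmoved <| ((mem_ballFixator_one hconn).mp
      (pow_mem_ballFixator_one hconn he hyx hx)).2 t hyt

theorem isPGroup_arcStabilizer [Fintype F] [PreservesAdj G X] (hconn : X.Connected)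
    (hchart : ∀ y, ∃ e : X.neighborSet y ≃ F, IsAffineChart (stabilizer G y) e) {u v : V}
    (huv : X.Adj u v) {p r m : ℕ} (hcard : Fintype.card F - 1 = p ^ r)
    (hm : ballFixator G X u m = ⊥) : IsPGroup p (arcStabilizer G u v) := fun g ↦ by
  refine ⟨r * m, Subtype.ext ?_⟩
  rw [pow_mul, ← hcard]
  exact mem_bot.mp (hm ▸ pow_mem_ballFixator hconn hchart huv g.2 m)

theorem finite_stabilizer [PreservesAdj G X] (hconn : X.Connected)
    (hfin : ∀ v, (X.neighborSet v).Finite) {u : V} {m : ℕ} (hm : ballFixator G X u m = ⊥) :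
    Finite (stabilizer G u) := by
  have := (finite_setOf_dist_le hconn hfin u m).to_subtype
  let restrict (g : stabilizer G u) (z : {z | X.dist u z ≤ m}) : {z | X.dist u z ≤ m} :=
    ⟨(g : G) • (z : V), by
      have hdist := dist_smul_smul (X := X) (g : G) u z
      rw [mem_stabilizer_iff.mp g.2] at hdist
      exact hdist.trans_le z.2⟩
  refine Finite.of_injective restrict fun g h hgh ↦ Subtype.ext <| inv_mul_eq_one.mp <|
    mem_bot.mp (hm ▸ mem_ballFixator.mpr fun z hz ↦ ?_)
  rw [mul_smul, inv_smul_eq_iff]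
  exact (congrArg Subtype.val (congrFun hgh ⟨z, hz⟩)).symm

theorem arcStabilizer_inf_centralizer_le_ballFixator_one [FaithfulSMul G V] [ArcTransitive G X]
    (hconn : X.Connected) {u v : V} [IsQuasiPreprimitive (stabilizer G u) (X.neighborSet u)]
    (huv : X.Adj u v) (hne : ballFixator G X u 1 ⊓ ballFixator G X v 1 ≠ ⊥) :
    arcStabilizer G u v ⊓ centralizer (arcStabilizer G u v : Set G) ≤ ballFixator G X u 1 := by
  rintro a ⟨ha, hac⟩
  by_contra hnot
  obtain ⟨t, hut, hat⟩ : ∃ t, X.Adj u t ∧ a • t ≠ t := by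
    simpa [mem_ballFixator_one hconn, mem_stabilizer_iff.mp ha.1] using hnot
  let S (x y : V) := ballFixator G X x 1 ⊓ ballFixator G X y 1
  have hS : starJoin X S u ≤ arcStabilizer G u v := iSup₂_le fun w _ ↦
    inf_le_left.trans (ballFixator_one_le_arcStabilizer huv)
  exact hne <| (isEdgeFamily_inf_ballFixator 1).eq_bot_of_mem_centralizer_starJoin hconn
    (centralizer_le hS hac) ha.1 hut hat huv

theorem relIndex_ballFixator_one_dvd_two [PreservesAdj G X] (hconn : X.Connected) {u x : V}
    {e : X.neighborSet u ≃ F} (he : IsAffineChart (stabilizer G u) e) (hux : X.Adj u x)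
    {W : Subgroup G} (hW : W ≤ arcStabilizer G u x) (hsq : ∀ w ∈ W, w ^ 2 = 1) :
    (ballFixator G X u 1).relIndex W ∣ 2 := by
  by_cases hle : W ≤ ballFixator G X u 1
  · simp [relIndex_eq_one.mpr hle]
  have hreflection {a : G} (ha : a ∈ W) (hnot : a ∉ ballFixator G X u 1) (z : X.neighborSet u) :
      e ((⟨a, (hW ha).1⟩ : stabilizer G u) • z) = 2 * e ⟨x, hux⟩ - e z := by
    obtain ⟨t, hut, hat⟩ : ∃ t, X.Adj u t ∧ a • t ≠ t := by
      simpa [mem_ballFixator_one hconn, mem_stabilizer_iff.mp (hW ha).1] using hnot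
    refine he.smul_eq_reflection (t := ⟨t, hut⟩) (Subtype.ext (mem_stabilizer_iff.mp (hW ha).2))
      (Subtype.ext ?_) (fun h ↦ hat (congrArg Subtype.val h)) z
    change a ^ 2 • t = t
    rw [hsq a ha, one_smul]
  obtain ⟨a, ha, hnot⟩ := SetLike.not_le_iff_exists.mp hle
  refine relIndex_dvd_two_iff.mpr ⟨a, ha, fun b hb ↦ or_iff_not_imp_right.mpr fun hbnot ↦ ?_⟩
  refine (mem_ballFixator_one hconn).mpr ⟨mul_mem (hW hb).1 (hW ha).1, fun w huw ↦ ?_⟩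
  have hba : (⟨b, (hW hb).1⟩ : stabilizer G u) • (⟨a, (hW ha).1⟩ : stabilizer G u) •
      (⟨w, huw⟩ : X.neighborSet u) = ⟨w, huw⟩ := e.injective <| by
    rw [hreflection hb hbnot, hreflection ha hnot, sub_sub_cancel]
  rw [mul_smul]
  exact congrArg Subtype.val hba

variable (G) in
/-- The subgroup `Z_uv = Ω₁(Z(G_uv))` of the arc stabilizer `G_uv`. -/
abbrev edgeInvolutions (u v : V) : Subgroup G :=
  centralInvolutions (arcStabilizer G u v)

theorem starJoin_edgeInvolutions_le_centralInvolutions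
    (hle : ∀ v w, X.Adj v w → edgeInvolutions G v w ≤ ballFixator G X v 1) (y : V) :
    starJoin X (edgeInvolutions G) y ≤ centralInvolutions (starJoin X (edgeInvolutions G) y) := by
  have hcentralize (w : V) (hyw : X.Adj y w) :
      starJoin X (edgeInvolutions G) y ≤ arcStabilizer G y w :=
    iSup₂_le fun w' hyw' ↦ (hle y w' hyw').trans (ballFixator_one_le_arcStabilizer hyw)
  refine iSup₂_le fun w hyw z hz ↦ ⟨?_, centralizer_le (hcentralize w hyw) hz.2.1, hz.2.2⟩
  exact le_starJoin (X := X) (edgeInvolutions G) hyw hz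

theorem relIndex_centralizer_dvd_two [PreservesAdj G X] (hconn : X.Connected)
    {u v y : V} {e : X.neighborSet u ≃ F} (he : IsAffineChart (stabilizer G u) e)
    (huv : X.Adj u v) (huy : u ≠ y) {a : G} (ha : a ∈ edgeInvolutions G u v)
    {W : Subgroup G} (hW : W ≤ ballFixator G X y (X.dist u y)) (hsq : ∀ w ∈ W, w ^ 2 = 1) :
    (centralizer {a}).relIndex W ∣ 2 := by
  obtain ⟨n, hn⟩ := Nat.exists_eq_succ_of_ne_zero fun h ↦ huy (hconn.dist_eq_zero_iff.mp h)
  obtain ⟨x, hxu, hyx⟩ := exists_adj_dist_eq_of_dist_eq_succ (dist_comm.trans hn)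
  have hWux : W ≤ arcStabilizer G u x :=
    le_inf (hW.trans (ballFixator_le_stabilizer y u dist_comm.le))
      (hW.trans (ballFixator_le_stabilizer y x (by omega)))
  refine (relIndex_dvd_of_le_left W ?_).trans
    (relIndex_ballFixator_one_dvd_two hconn he hxu.symm hWux hsq)
  refine (ballFixator_one_le_arcStabilizer huv).trans fun h hh ↦
    mem_centralizer_singleton_iff.mpr (mem_centralizer_iff.mp ha.2.1 h hh)

theorem exists_mem_centralizer_smul_ne [ArcTransitive G X] {x y t : V} {e : X.neighborSet y ≃ F}
    (he : IsAffineChart (stabilizer G y) e) (hF : (48 : F) ≠ 0) (hyx : X.Adj y x)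
    (hyt : X.Adj y t) {W : Subgroup G} [IsMulCommutative W]
    (hnormal : stabilizer G y ≤ normalizer (W : Set G)) {a : G} (ha : a ∈ arcStabilizer G y x)
    (hsq : a ^ 2 = 1) (hat : a • t ≠ t) (haW : (centralizer {a}).relIndex W ∣ 2) :
    ∃ c ∈ centralizer (W : Set G), c • y = y ∧ c • x ≠ x := by
  let x' : X.neighborSet y := ⟨x, hyx⟩
  let t' : X.neighborSet y := ⟨t, hyt⟩
  let a' : stabilizer G y := ⟨a, ha.1⟩
  have hax : a' • x' = x' := Subtype.ext (mem_stabilizer_iff.mp ha.2)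
  have hat' : a' • t' ≠ t' := fun h ↦ hat (congrArg Subtype.val h)
  have hsq' : a' ^ 2 = 1 := Subtype.ext hsq
  have hxt : x' ≠ t' := fun h ↦ hat' (h ▸ hax)
  obtain ⟨g, hg⟩ := exists_smul_eq (stabilizer G y) x' t'
  let b' : stabilizer G y := MulAut.conj g a'
  have hb (z : X.neighborSet y) : b' • g • z = g • a' • z := by
    simp only [b', MulAut.conj_apply, mul_smul, inv_smul_smul]
  have hbW : (centralizer {(b' : G)}).relIndex W ∣ 2 :=
    (relIndex_centralizer_conj (hnormal g.2)).symm ▸ haW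
  refine ⟨((a' * b') ^ 24 : stabilizer G y),
    mul_pow_mem_centralizer (hnormal a'.2) (hnormal b'.2) haW hbW, ((a' * b') ^ 24).2, fun h ↦ ?_⟩
  have hbt : b' • t' = t' := by rw [← hg, hb, hax]
  have hbsq : b' ^ 2 = 1 := by rw [← map_pow, hsq', map_one]
  have hbgt : b' • g • t' ≠ g • t' := by
    rw [hb]
    exact (MulAction.injective g).ne hat'
  have hF' : (2 * (24 : ℕ) : F) ≠ 0 := by
    norm_num
    exact hF
  exact he.mul_pow_smul_ne hax (by rw [hsq', one_smul]) hat' hbt (by rw [hbsq, one_smul]) hbgt hxt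
    hF' x' (Subtype.ext h)

theorem edgeInvolutions_le_ballFixator_succ [FaithfulSMul G V] [ArcTransitive G X]
    [∀ y, IsQuasiPreprimitive (stabilizer G y) (X.neighborSet y)] (hconn : X.Connected)
    (hchart : ∀ y, ∃ e : X.neighborSet y ≃ F, IsAffineChart (stabilizer G y) e)
    (hF : (48 : F) ≠ 0) {n : ℕ} (hn : 1 ≤ n)
    (hle : ∀ u v, X.Adj u v → edgeInvolutions G u v ≤ ballFixator G X u n)
    {u v : V} (huv : X.Adj u v) :
    edgeInvolutions G u v ≤ ballFixator G X u (n + 1) := by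
  intro a ha
  by_contra hnot
  obtain ⟨y, t, hyt, rfl, hat⟩ := exists_adj_smul_ne_of_notMem_ballFixator (hle u v huv ha) hnot
  have huy : u ≠ y := fun h ↦ by simp [h] at hn
  obtain ⟨x, hyx, hay, hax⟩ := exists_adj_mem_arcStabilizer hconn huv (hle u v huv ha) ha.1.2
  obtain ⟨e, he⟩ := hchart u
  obtain ⟨e', he'⟩ := hchart y
  let W := starJoin X (edgeInvolutions G) y
  have hZ : IsEdgeFamily G (edgeInvolutions (V := V) G) :=
    isEdgeFamily_arcStabilizer.centralInvolutions
  have hWinv : W ≤ centralInvolutions W := starJoin_edgeInvolutions_le_centralInvolutions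
    (fun v w hvw ↦ (hle v w hvw).trans (ballFixator_le_ballFixator hconn (by simpa))) y
  have hWball : W ≤ ballFixator G X y (X.dist u y) := iSup₂_le (hle y)
  have : IsMulCommutative W := le_centralizer_iff_isMulCommutative.mp fun w hw ↦ (hWinv hw).2.1
  have haW : (centralizer {a}).relIndex W ∣ 2 :=
    relIndex_centralizer_dvd_two hconn he huv huy ha hWball fun w hw ↦ (hWinv hw).2.2
  obtain ⟨c, hc, hcy, hcx⟩ := exists_mem_centralizer_smul_ne he' hF hyx hyt
    (hZ.stabilizer_le_normalizer_starJoin y) ⟨hay, hax⟩ ha.2.2 hat haW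
  have hbot : edgeInvolutions G u v = ⊥ :=
    hZ.eq_bot_of_mem_centralizer_starJoin hconn hc hcy hyx hcx huv
  have ha1 : a = 1 := mem_bot.mp (hbot ▸ ha)
  exact hat (by rw [ha1, one_smul])

theorem inf_ballFixator_one_eq_bot [FaithfulSMul G V] [ArcTransitive G X]
    [∀ y, IsQuasiPreprimitive (stabilizer G y) (X.neighborSet y)] (hconn : X.Connected)
    (hchart : ∀ y, ∃ e : X.neighborSet y ≃ F, IsAffineChart (stabilizer G y) e)
    (hF : (48 : F) ≠ 0) {u v : V} (huv : X.Adj u v) [Finite (arcStabilizer G u v)]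
    (h2 : IsPGroup 2 (arcStabilizer G u v)) :
    ballFixator G X u 1 ⊓ ballFixator G X v 1 = ⊥ := by
  by_contra hE
  have hZ (n : ℕ) : ∀ u v, X.Adj u v → edgeInvolutions G u v ≤ ballFixator G X u (n + 1) := by
    induction n with
    | zero =>
      exact fun x y hxy a ha ↦ arcStabilizer_inf_centralizer_le_ballFixator_one hconn hxy
        (fun h ↦ hE ((isEdgeFamily_inf_ballFixator 1).eq_bot_of_eq_bot hxy huv h)) ⟨ha.1, ha.2.1⟩
    | succ n ih =>
      exact fun x y ↦ edgeInvolutions_le_ballFixator_succ hconn hchart hF n.succ_pos ih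
  have hZbot : edgeInvolutions G u v = ⊥ :=
    (eq_bot_iff_forall _).mpr fun a ha ↦ eq_one_of_forall_mem_ballFixator (X := X) (x := u)
      fun m ↦ ballFixator_le_ballFixator hconn (by simp) (hZ m u v huv ha)
  have harc : arcStabilizer G u v = ⊥ := of_not_not fun h ↦ centralInvolutions_ne_bot h2 h hZbot
  exact hE (le_bot_iff.mp (harc ▸ inf_le_left.trans (ballFixator_one_le_arcStabilizer huv)))

end LocallyAffine

theorem solvable_stabilizer_fixing_edge_and_neighbors_eq_one_general [FaithfulSMul G V]
    [ArcTransitive G X] (hconn : X.Connected) {p r : ℕ} [hp : Fact p.Prime]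
    (hpr : p = 2 ^ r + 1) (hp3 : 3 < p) (hreg : ∀ v, (X.neighborSet v).ncard = p)
    (hsolv : ∀ v : V, Group.IsSolvable (stabilizer G v)) {u v : V} (huv : X.Adj u v) {g : G}
    (hgu : ∀ w, X.Adj u w → g • w = w) (hgv : ∀ w, X.Adj v w → g • w = w) : g = 1 := by
  have hcard (y : V) : Nat.card (X.neighborSet y) = p := hreg y
  have hchart (y : V) : ∃ e : X.neighborSet y ≃ ZMod p, IsAffineChart (stabilizer G y) e :=
    exists_isAffineChart_of_isSolvable _ (hcard y)
  have hfin (y : V) : (X.neighborSet y).Finite :=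
    Set.finite_of_ncard_ne_zero (hreg y ▸ hp.out.ne_zero)
  have (y : V) : IsPreprimitive (stabilizer G y) (X.neighborSet y) :=
    .of_prime_card (hcard y ▸ hp.out)
  obtain ⟨m, hm⟩ := exists_ballFixator_eq_bot (G := G) hconn u
  have := finite_stabilizer hconn hfin hm
  have : Finite (arcStabilizer G u v) := Finite.Set.subset (stabilizer G u : Set G) inf_le_left
  have hcardF : Fintype.card (ZMod p) - 1 = 2 ^ r := by rw [ZMod.card, hpr, Nat.add_sub_cancel]
  have h2 : IsPGroup 2 (arcStabilizer G u v) :=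
    isPGroup_arcStabilizer hconn hchart huv hcardF hm
  have h48 : (48 : ZMod p) ≠ 0 := by
    intro h
    have hdvd : p ∣ 2 ^ 4 * 3 := (ZMod.natCast_eq_zero_iff 48 p).mp h
    rcases hp.out.dvd_mul.mp hdvd with h2 | h3
    · exact absurd (Nat.le_of_dvd two_pos (hp.out.dvd_of_dvd_pow h2)) (by omega)
    · exact absurd (Nat.le_of_dvd three_pos h3) (by omega)
  have hmem : g ∈ ballFixator G X u 1 ⊓ ballFixator G X v 1 :=
    ⟨(mem_ballFixator_one hconn).mpr ⟨hgv u huv.symm, hgu⟩,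
      (mem_ballFixator_one hconn).mpr ⟨hgu v huv, hgv⟩⟩
  exact mem_bot.mp (inf_ballFixator_one_eq_bot hconn hchart h48 huv h2 ▸ hmem)

end GraphActions

/-- Let `X` be a connected 5-regular simple graph and `G` a group of automorphisms of `X`
acting transitively on the arcs of `X` with solvable vertex-stabilizers. Then for every
edge `uv` of `X`, the only element of `G` fixing `u`, `v` and all their neighbors is the
identity. -/
theorem solvable_stabilizer_fixing_edge_and_neighbors_eq_one
    {V : Type*} (X : SimpleGraph V) (hconn : X.Connected)
    (hreg : ∀ v : V, (X.neighborSet v).ncard = 5)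
    (G : Subgroup (Equiv.Perm V))
    (hGaut : ∀ g ∈ G, ∀ u v : V, X.Adj (g u) (g v) ↔ X.Adj u v)
    (hGarc : ∀ u v u' v' : V, X.Adj u v → X.Adj u' v' → ∃ g ∈ G, g u = u' ∧ g v = v')
    (hsolv : ∀ v : V, IsSolvable (MulAction.stabilizer G v)) :
    ∀ u v : V, X.Adj u v → ∀ g ∈ G, g u = u → g v = v →
      (∀ w, X.Adj u w → g w = w) → (∀ w, X.Adj v w → g w = w) → g = 1 := by
  intro u v huv g hg _ _ hgu hgv
  have : ArcTransitive G X :=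
    { adj_smul_iff := fun h ↦ hGaut h h.2
      exists_smul_eq_smul_eq := fun {u v u' v'} huv huv' ↦
        let ⟨h, hh, hu, hv⟩ := hGarc u v u' v' huv huv'
        ⟨⟨h, hh⟩, hu, hv⟩ }
  have : Fact (Nat.Prime 5) := ⟨Nat.prime_five⟩
  exact congrArg Subtype.val <| solvable_stabilizer_fixing_edge_and_neighbors_eq_one_general
    hconn (r := 2) rfl (by simp) hreg hsolv huv (g := (⟨g, hg⟩ : G)) hgu hgv
end

section
/- Let Γ be a connected cubic simple graph (finite or infinite) of girth 4 that contains a consistent cycle of length 4 and in which every edge is contained in a cycle of length 4. Then Γ is isomorphic to the complete bipartite graph K_{3,3} or to the 3-dimensional cube graph Q_3. -/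
open SimpleGraph

/-- `G` contains a consistent cycle of length `n`: a cycle `c 0, c 1, …, c (n-1), c 0`
together with an automorphism rotating it by one step. -/
def HasConsistentCycle {V : Type*} (G : SimpleGraph V) (n : ℕ) : Prop :=
  ∃ c : ZMod n → V, Function.Injective c ∧ (∀ i, G.Adj (c i) (c (i + 1))) ∧
    ∃ γ : G ≃g G, ∀ i, γ (c i) = c (i + 1)
/-- The 3-dimensional cube graph: vertices are the vectors of `{0,1}³`, two adjacent iff
they differ in exactly one coordinate. -/
def cubeGraph : SimpleGraph (Fin 3 → Bool) :=
  SimpleGraph.fromRel (fun x y => (Finset.univ.filter fun i => x i ≠ y i).card = 1)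

/-!
Let `b i` be the neighbour of `c i` off the consistent 4-cycle `c`; the rotation `γ` carries `b i`
to `b (i + 1)`. A 4-cycle through the edge from `c i` to `b i` forces `b i` to be adjacent to
`c (i + 2)` or to one of `b (i ± 1)`. In the first case `c i` and `c (i + 2)` have the same
neighbours, and two such twins lie in a `K_{3,3}`, because a 4-cycle through an edge leaving the
twins' neighbourhood must return through another of their neighbours. If there are no twins then,
by rotation, `b` is a 4-cycle parallel to `c`, and the two span a cube. Either way the subgraph
found exhausts `Γ`, as a cubic subgraph of a connected cubic graph is the whole graph.
-/

section General

variable {V W : Type*} {Γ : SimpleGraph V} {H : SimpleGraph W}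

theorem exists_eq_insert_pair_of_ncard_eq_three {α : Type*} {s : Set α} (hs : s.ncard = 3)
    {a b : α} (ha : a ∈ s) (hb : b ∈ s) (hab : a ≠ b) :
    ∃ d, d ≠ a ∧ d ≠ b ∧ s = {a, b, d} := by
  obtain ⟨d, hd, rfl⟩ := (Set.exists_eq_insert_iff_ncard (s := {a, b}) (Set.toFinite _)).2
    ⟨Set.pair_subset ha hb, by rw [Set.ncard_pair hab, hs]⟩
  simp only [Set.mem_insert_iff, Set.mem_singleton_iff, not_or] at hd
  exact ⟨d, hd.1, hd.2, by rw [Set.insert_comm d a, Set.pair_comm d b]⟩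

theorem cliqueFree_three_of_three_lt_egirth (h : 3 < Γ.egirth) : Γ.CliqueFree 3 := by
  intro s hs
  obtain ⟨u, w, hw, hlen⟩ := is3Clique_iff_exists_cycle_length_three.1 ⟨s, hs⟩
  exact (h.trans_le (egirth_le_length hw)).ne' (by rw [hlen]; rfl)

theorem not_adj_of_adj_of_adj_of_cliqueFree_three (h : Γ.CliqueFree 3) {u v w : V}
    (huv : Γ.Adj u v) (hvw : Γ.Adj v w) : ¬Γ.Adj w u := by
  classical
  exact fun hwu => h {u, v, w} (is3Clique_triple_iff.2 ⟨huv, hwu.symm, hvw⟩)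

theorem surjective_of_neighborSet_subset_range (hΓ : Γ.Preconnected) [Nonempty W] {f : W → V}
    (hf : ∀ w, Γ.neighborSet (f w) ⊆ Set.range f) : Function.Surjective f := by
  intro v
  by_contra hv
  obtain ⟨p⟩ := hΓ (f (Classical.arbitrary W)) v
  obtain ⟨d, -, ⟨w, hw⟩, hd⟩ :=
    p.exists_boundary_dart (Set.range f) (Set.mem_range_self _) hv
  exact hd (hf w (hw ▸ d.adj))

theorem image_neighborSet_eq_of_ncard_le (f : Copy H Γ) {w : W}
    (hfin : (Γ.neighborSet (f w)).Finite)
    (hle : (Γ.neighborSet (f w)).ncard ≤ (H.neighborSet w).ncard) :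
    f '' H.neighborSet w = Γ.neighborSet (f w) :=
  Set.eq_of_subset_of_ncard_le (f.toHom.image_neighborSet_subset w)
    (hle.trans_eq (Set.ncard_image_of_injective _ f.injective).symm) hfin

theorem nonempty_iso_of_copy (hΓ : Γ.Preconnected) [Nonempty W] (f : Copy H Γ)
    (hfin : ∀ w, (Γ.neighborSet (f w)).Finite)
    (hle : ∀ w, (Γ.neighborSet (f w)).ncard ≤ (H.neighborSet w).ncard) :
    Nonempty (Γ ≃g H) := by
  have himage (w : W) : f '' H.neighborSet w = Γ.neighborSet (f w) :=
    image_neighborSet_eq_of_ncard_le f (hfin w) (hle w)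
  have hsurj : Function.Surjective f :=
    surjective_of_neighborSet_subset_range hΓ fun w => himage w ▸ Set.image_subset_range _ _
  have hadj (x y : W) : Γ.Adj (f x) (f y) ↔ H.Adj x y := by
    rw [← mem_neighborSet, ← himage]
    exact f.injective.mem_set_image
  exact ⟨RelIso.symm ⟨Equiv.ofBijective f ⟨f.injective, hsurj⟩, hadj _ _⟩⟩

theorem nonempty_iso_of_copy_of_regular (hΓ : Γ.Preconnected) [Nonempty W] {d : ℕ} (hd : d ≠ 0)
    (hΓd : ∀ v, (Γ.neighborSet v).ncard = d) (hHd : ∀ w, (H.neighborSet w).ncard = d)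
    (f : Copy H Γ) : Nonempty (Γ ≃g H) :=
  nonempty_iso_of_copy hΓ f (fun w => Set.finite_of_ncard_ne_zero (hΓd (f w) ▸ hd))
    fun w => by rw [hΓd, hHd]

end General

section FourCycle

variable {V : Type*} {Γ : SimpleGraph V}

/-- The edge `uw` of `Γ` lies on a 4-cycle `u, w, x, y`. -/
def LiesOnFourCycle (Γ : SimpleGraph V) (u w : V) : Prop :=
  ∃ x y, Γ.Adj u w ∧ Γ.Adj w x ∧ Γ.Adj x y ∧ Γ.Adj y u ∧ x ≠ u ∧ y ≠ w

theorem liesOnFourCycle_of_injective {d : ZMod 4 → V} (hd : Function.Injective d)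
    (hadj : ∀ i, Γ.Adj (d i) (d (i + 1))) : LiesOnFourCycle Γ (d 0) (d 1) :=
  ⟨d 2, d 3, hadj 0, hadj 1, hadj 2, hadj 3, hd.ne (by decide), hd.ne (by decide)⟩

end FourCycle

section Twins

variable {V : Type*} {Γ : SimpleGraph V} {u v : V}

theorem LiesOnFourCycle.exists_adj_of_twins (htwin : Γ.neighborSet u = Γ.neighborSet v) {x a : V}
    (hx : Γ.neighborSet x = {u, v, a}) (hxa : LiesOnFourCycle Γ x a) :
    ∃ y, y ≠ x ∧ Γ.Adj u y ∧ Γ.Adj y a := by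
  obtain ⟨y, t, -, hay, hyt, htx, hyx, hta⟩ := hxa
  have ht : t ∈ ({u, v, a} : Set V) := hx ▸ htx.symm
  refine ⟨y, hyx, ?_, hay.symm⟩
  rcases ht with rfl | rfl | rfl
  · exact hyt.symm
  · exact htwin.symm.subset hyt.symm
  · exact absurd rfl hta

theorem exists_common_third_neighbor_of_twins (hcubic : ∀ v, (Γ.neighborSet v).ncard = 3)
    (hedge : ∀ u w, Γ.Adj u w → LiesOnFourCycle Γ u w) (huv : u ≠ v)
    (htwin : Γ.neighborSet u = Γ.neighborSet v) :
    ∃ w, w ≠ u ∧ w ≠ v ∧ ∀ x, Γ.Adj u x → Γ.Adj w x := by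
  have hthird (x : V) (hx : Γ.Adj u x) :
      ∃ a, a ≠ u ∧ a ≠ v ∧ Γ.neighborSet x = {u, v, a} :=
    exists_eq_insert_pair_of_ncard_eq_three (hcubic x) hx.symm (htwin.subset hx).symm huv
  obtain ⟨x₁, x₂, x₃, -, -, -, hu⟩ := Set.ncard_eq_three.1 (hcubic u)
  have hadj (x : V) : Γ.Adj u x ↔ x = x₁ ∨ x = x₂ ∨ x = x₃ := Set.ext_iff.1 hu x
  choose! a hau hav ha using hthird
  have haa (x : V) (hx : Γ.Adj u x) : Γ.Adj x (a x) := (ha x hx).symm.subset (by simp)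
  have hshare (x : V) (hx : Γ.Adj u x) : ∃ y, y ≠ x ∧ Γ.Adj u y ∧ a x = a y := by
    obtain ⟨y, hyx, hy, hya⟩ := (hedge x (a x) (haa x hx)).exists_adj_of_twins htwin (ha x hx)
    rcases (ha y hy).subset hya with h | h | h
    exacts [absurd h (hau x hx), absurd h (hav x hx), ⟨y, hyx, hy, h⟩]
  -- Every fibre of `a` on the three-element set of neighbours of `u` has at least two elements.
  have hconst (x : V) (hx : Γ.Adj u x) : a x = a x₁ := by grind
  have hx₁ : Γ.Adj u x₁ := (hadj x₁).2 (Or.inl rfl)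
  exact ⟨a x₁, hau x₁ hx₁, hav x₁ hx₁, fun x hx => hconst x hx ▸ (haa x hx).symm⟩

theorem neighborSet_completeBipartiteGraph_inl {α β : Type*} (a : α) :
    (completeBipartiteGraph α β).neighborSet (Sum.inl a) = Set.range Sum.inr := by
  ext (_ | _) <;> simp

theorem neighborSet_completeBipartiteGraph_inr {α β : Type*} (b : β) :
    (completeBipartiteGraph α β).neighborSet (Sum.inr b) = Set.range Sum.inl := by
  ext (_ | _) <;> simp

theorem ncard_neighborSet_completeBipartiteGraph_self {α : Type*} (w : α ⊕ α) :
    ((completeBipartiteGraph α α).neighborSet w).ncard = Nat.card α := by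
  rcases w with a | a
  · rw [neighborSet_completeBipartiteGraph_inl, Set.ncard_range_of_injective Sum.inr_injective]
  · rw [neighborSet_completeBipartiteGraph_inr, Set.ncard_range_of_injective Sum.inl_injective]

theorem nonempty_iso_completeBipartiteGraph_of_twins (hΓ : Γ.Preconnected)
    (hcubic : ∀ v, (Γ.neighborSet v).ncard = 3)
    (hedge : ∀ u w, Γ.Adj u w → LiesOnFourCycle Γ u w) (huv : u ≠ v)
    (htwin : Γ.neighborSet u = Γ.neighborSet v) :
    Nonempty (Γ ≃g completeBipartiteGraph (Fin 3) (Fin 3)) := by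
  classical
  obtain ⟨w, hwu, hwv, hw⟩ := exists_common_third_neighbor_of_twins hcubic hedge huv htwin
  obtain ⟨x, y, z, hxy, hxz, hyz, hu⟩ := Set.ncard_eq_three.1 (hcubic u)
  have hcomplete : Γ.IsCompleteBetween ({u, v, w} : Finset V) ({x, y, z} : Finset V) := by
    intro s hs t ht
    have hut : Γ.Adj u t := hu.symm.subset (by simpa using ht)
    obtain rfl | rfl | rfl : s = u ∨ s = v ∨ s = w := by simpa using hs
    exacts [hut, htwin.subset hut, hw t hut]
  obtain ⟨f⟩ : completeBipartiteGraph (Fin 3) (Fin 3) ⊑ Γ :=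
    completeBipartiteGraph_isContained_iff.2 ⟨{u, v, w}, {x, y, z},
      by rw [Finset.card_eq_three.2 ⟨u, v, w, huv, hwu.symm, hwv.symm, rfl⟩, Fintype.card_fin],
      by rw [Finset.card_eq_three.2 ⟨x, y, z, hxy, hxz, hyz, rfl⟩, Fintype.card_fin], hcomplete⟩
  exact nonempty_iso_of_copy_of_regular hΓ three_ne_zero hcubic
    (fun w => by rw [ncard_neighborSet_completeBipartiteGraph_self, Nat.card_fin]) f

end Twins

section Cube

variable {V : Type*} {Γ : SimpleGraph V}

instance : DecidableRel cubeGraph.Adj :=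
  inferInstanceAs (DecidableRel (SimpleGraph.fromRel _).Adj)

theorem ncard_neighborSet_cubeGraph (x : Fin 3 → Bool) : (cubeGraph.neighborSet x).ncard = 3 := by
  rw [Set.ncard_eq_toFinset_card']
  revert x
  decide

/-- The cyclic Gray code on two bits: the position of `(a, b)` on the 4-cycle formed by a face of
the cube. -/
def grayCode : Bool → Bool → ZMod 4
  | false, false => 0
  | true, false => 1
  | true, true => 2
  | false, true => 3

/-- The cube as a prism over a 4-cycle: the last coordinate selects the bottom (`inl`) or top
(`inr`) face, the first two give the position on that face. -/
def prismCode (x : Fin 3 → Bool) : ZMod 4 ⊕ ZMod 4 :=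
  if x 2 then Sum.inr (grayCode (x 0) (x 1)) else Sum.inl (grayCode (x 0) (x 1))

theorem prismCode_injective : Function.Injective prismCode := by
  unfold Function.Injective
  decide

theorem exists_prismCode_eq_of_cubeGraph_adj {x y : Fin 3 → Bool} (h : cubeGraph.Adj x y) :
    ∃ i, s(prismCode x, prismCode y) = s(Sum.inl i, Sum.inl (i + 1)) ∨
      s(prismCode x, prismCode y) = s(Sum.inr i, Sum.inr (i + 1)) ∨
      s(prismCode x, prismCode y) = s(Sum.inl i, Sum.inr i) := by
  revert x y
  decide

theorem cubeGraph_isContained_of_prism {c b : ZMod 4 → V} (hc : Function.Injective c)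
    (hb : Function.Injective b) (hne : ∀ i j, c i ≠ b j)
    (hcc : ∀ i, Γ.Adj (c i) (c (i + 1))) (hbb : ∀ i, Γ.Adj (b i) (b (i + 1)))
    (hcb : ∀ i, Γ.Adj (c i) (b i)) : cubeGraph ⊑ Γ := by
  refine ⟨⟨⟨Sum.elim c b ∘ prismCode, fun {x y} hxy => ?_⟩,
    (hc.sumElim hb hne).comp prismCode_injective⟩⟩
  change Sym2.map (Sum.elim c b) s(prismCode x, prismCode y) ∈ Γ.edgeSet
  obtain ⟨i, h | h | h⟩ := exists_prismCode_eq_of_cubeGraph_adj hxy <;> rw [h]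
  exacts [hcc i, hbb i, hcb i]

end Cube

/-- `c` is a closed walk of length `n` and `b i`, the spoke at `c i`, is the one neighbour of `c i`
besides its predecessor and its successor on the walk. For `n = 0` the index set is `ℤ` and the walk
is infinite in both directions. -/
structure IsSpokedCycle {V : Type*} {n : ℕ} (Γ : SimpleGraph V) (c b : ZMod n → V) : Prop where
  neighborSet_eq : ∀ i, Γ.neighborSet (c i) = {c (i + 1), c (i - 1), b i}
  spoke_ne_succ : ∀ i, b i ≠ c (i + 1)
  spoke_ne_pred : ∀ i, b i ≠ c (i - 1)

theorem forall_zmod_of_forall_succ {n : ℕ} [NeZero n] {P : ZMod n → Prop}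
    (hsucc : ∀ i, P i → P (i + 1)) {i : ZMod n} (hi : P i) (j : ZMod n) : P j := by
  have hadd (k : ℕ) : P (i + k) := by
    induction k with
    | zero => simpa using hi
    | succ k ih => simpa [add_assoc] using hsucc _ ih
  simpa using hadd (j - i).val

theorem zmod_four_cases (i j : ZMod 4) : j = i ∨ j = i + 1 ∨ j = i + 2 ∨ i = j + 1 := by
  revert i j
  decide

theorem exists_isSpokedCycle {V : Type*} {n : ℕ} {Γ : SimpleGraph V} {c : ZMod n → V}
    (hcubic : ∀ v, (Γ.neighborSet v).ncard = 3) (hn : (2 : ZMod n) ≠ 0)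
    (hc : Function.Injective c) (hadj : ∀ i, Γ.Adj (c i) (c (i + 1))) :
    ∃ b, IsSpokedCycle Γ c b := by
  have hpred (i : ZMod n) : Γ.Adj (c i) (c (i - 1)) := by simpa using (hadj (i - 1)).symm
  have hne (i : ZMod n) : c (i + 1) ≠ c (i - 1) := hc.ne fun h => hn (by linear_combination h)
  choose b hsucc hpred hb using fun i =>
    exists_eq_insert_pair_of_ncard_eq_three (hcubic (c i)) (hadj i) (hpred i) (hne i)
  exact ⟨b, hb, hsucc, hpred⟩

namespace IsSpokedCycle

variable {V : Type*} {n : ℕ} {Γ : SimpleGraph V}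

section AnyLength

variable {c b : ZMod n → V}

theorem adj_iff (h : IsSpokedCycle Γ c b) {i : ZMod n} {x : V} :
    Γ.Adj (c i) x ↔ x = c (i + 1) ∨ x = c (i - 1) ∨ x = b i :=
  Set.ext_iff.1 (h.neighborSet_eq i) x

theorem adj_succ (h : IsSpokedCycle Γ c b) (i : ZMod n) : Γ.Adj (c i) (c (i + 1)) :=
  h.adj_iff.2 (Or.inl rfl)

theorem adj_spoke (h : IsSpokedCycle Γ c b) (i : ZMod n) : Γ.Adj (c i) (b i) :=
  h.adj_iff.2 (Or.inr (Or.inr rfl))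

theorem spoke_ne_spoke_succ (h : IsSpokedCycle Γ c b) (htri : Γ.CliqueFree 3) (i : ZMod n) :
    b i ≠ b (i + 1) := fun heq =>
  not_adj_of_adj_of_adj_of_cliqueFree_three htri (h.adj_succ i) (heq ▸ h.adj_spoke (i + 1))
    (h.adj_spoke i).symm

theorem map_spoke (h : IsSpokedCycle Γ c b) {γ : Γ ≃g Γ} (hγ : ∀ i, γ (c i) = c (i + 1))
    (i : ZMod n) : γ (b i) = b (i + 1) := by
  have hadj : Γ.Adj (c (i + 1)) (γ (b i)) := hγ i ▸ γ.map_adj_iff.2 (h.adj_spoke i)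
  rcases h.adj_iff.1 hadj with heq | heq | heq
  · exact absurd (γ.injective (heq.trans (hγ (i + 1)).symm)) (h.spoke_ne_succ i)
  · have hpred : γ (c (i - 1)) = c (i + 1 - 1) := by rw [hγ]; congr 1; ring
    exact absurd (γ.injective (heq.trans hpred.symm)) (h.spoke_ne_pred i)
  · exact heq

theorem adj_spoke_cases_of_liesOnFourCycle (h : IsSpokedCycle Γ c b) {i : ZMod n}
    (hi : LiesOnFourCycle Γ (c i) (b i)) :
    Γ.Adj (c (i + 2)) (b i) ∨ Γ.Adj (c (i - 2)) (b i) ∨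
      Γ.Adj (b i) (b (i + 1)) ∨ Γ.Adj (b (i - 1)) (b i) := by
  obtain ⟨x, y, -, hbx, hxy, hyc, hxc, hyb⟩ := hi
  rcases h.adj_iff.1 hyc.symm with rfl | rfl | rfl
  · rcases h.adj_iff.1 hxy.symm with rfl | rfl | rfl
    · exact Or.inl (by convert hbx.symm using 2; ring)
    · exact absurd (by ring_nf) hxc
    · exact Or.inr (Or.inr (Or.inl hbx))
  · rcases h.adj_iff.1 hxy.symm with rfl | rfl | rfl
    · exact absurd (by ring_nf) hxc
    · exact Or.inr (Or.inl (by convert hbx.symm using 2; ring))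
    · exact Or.inr (Or.inr (Or.inr hbx.symm))
  · exact absurd rfl hyb

theorem adj_spoke_succ_of_liesOnFourCycle (h : IsSpokedCycle Γ c b) [NeZero n]
    {γ : Γ ≃g Γ} (hγ : ∀ i, γ (c i) = c (i + 1)) {i : ZMod n}
    (hi : LiesOnFourCycle Γ (c i) (b i)) (hsucc : ¬Γ.Adj (c (i + 2)) (b i))
    (hpred : ¬Γ.Adj (c (i - 2)) (b i)) (j : ZMod n) : Γ.Adj (b j) (b (j + 1)) := by
  have hrotate (k : ZMod n) (hk : Γ.Adj (b k) (b (k + 1))) :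
      Γ.Adj (b (k + 1)) (b (k + 1 + 1)) := by
    rw [← h.map_spoke hγ k, ← h.map_spoke hγ (k + 1)]
    exact γ.map_adj_iff.2 hk
  rcases h.adj_spoke_cases_of_liesOnFourCycle hi with hadj | hadj | hadj | hadj
  · exact absurd hadj hsucc
  · exact absurd hadj hpred
  · exact forall_zmod_of_forall_succ hrotate hadj j
  · exact forall_zmod_of_forall_succ hrotate (i := i - 1) (by rwa [sub_add_cancel]) j

end AnyLength

section LengthFour

variable {c b : ZMod 4 → V}

theorem neighborSet_add_two (h : IsSpokedCycle Γ c b) (i : ZMod 4) :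
    Γ.neighborSet (c (i + 2)) = {c (i + 1), c (i - 1), b (i + 2)} := by
  have hsucc : ∀ i : ZMod 4, i + 2 + 1 = i - 1 := by decide
  have hpred : ∀ i : ZMod 4, i + 2 - 1 = i + 1 := by decide
  rw [h.neighborSet_eq, hsucc, hpred, Set.insert_comm]

theorem spoke_ne_spoke_add_two (h : IsSpokedCycle Γ c b) (hc : Function.Injective c)
    (hN : Function.Injective Γ.neighborSet) (i : ZMod 4) : b i ≠ b (i + 2) := by
  intro heq
  have htwin : Γ.neighborSet (c i) = Γ.neighborSet (c (i + 2)) := by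
    rw [h.neighborSet_eq, h.neighborSet_add_two, heq]
  have hi : ∀ i : ZMod 4, i ≠ i + 2 := by decide
  exact hi i (hc (hN htwin))

theorem not_adj_spoke_add_two (h : IsSpokedCycle Γ c b) (hc : Function.Injective c)
    (hN : Function.Injective Γ.neighborSet) (i : ZMod 4) : ¬Γ.Adj (c (i + 2)) (b i) := by
  intro hadj
  rcases (h.neighborSet_add_two i).subset hadj with heq | heq | heq
  · exact h.spoke_ne_succ i heq
  · exact h.spoke_ne_pred i heq
  · exact h.spoke_ne_spoke_add_two hc hN i heq

theorem spoke_injective (h : IsSpokedCycle Γ c b) (htri : Γ.CliqueFree 3)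
    (hc : Function.Injective c) (hN : Function.Injective Γ.neighborSet) : Function.Injective b := by
  intro i j heq
  rcases zmod_four_cases i j with rfl | rfl | rfl | rfl
  · rfl
  · exact absurd heq (h.spoke_ne_spoke_succ htri i)
  · exact absurd heq (h.spoke_ne_spoke_add_two hc hN i)
  · exact absurd heq.symm (h.spoke_ne_spoke_succ htri j)

theorem ne_spoke (h : IsSpokedCycle Γ c b) (htri : Γ.CliqueFree 3) (i j : ZMod 4) : c i ≠ b j := by
  intro heq
  rcases zmod_four_cases i j with rfl | rfl | rfl | rfl
  · exact (h.adj_spoke _).ne heq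
  · exact h.spoke_ne_pred (i + 1) (by rw [add_sub_cancel_right, heq])
  · have hadj : Γ.Adj (c (i + 1)) (c (i + 2)) := by
      simpa [add_assoc, one_add_one_eq_two] using h.adj_succ (i + 1)
    exact not_adj_of_adj_of_adj_of_cliqueFree_three htri (h.adj_succ i) hadj
      (heq ▸ h.adj_spoke (i + 2))
  · exact h.spoke_ne_succ j heq.symm

theorem cubeGraph_isContained (h : IsSpokedCycle Γ c b) (htri : Γ.CliqueFree 3)
    (hc : Function.Injective c) (hN : Function.Injective Γ.neighborSet) {γ : Γ ≃g Γ}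
    (hγ : ∀ i, γ (c i) = c (i + 1)) {i : ZMod 4} (hi : LiesOnFourCycle Γ (c i) (b i)) :
    cubeGraph ⊑ Γ := by
  have hsub : ∀ i : ZMod 4, i - 2 = i + 2 := by decide
  have hopposite : ¬Γ.Adj (c (i + 2)) (b i) := h.not_adj_spoke_add_two hc hN i
  have hbb : ∀ j, Γ.Adj (b j) (b (j + 1)) :=
    h.adj_spoke_succ_of_liesOnFourCycle hγ hi hopposite (hsub i ▸ hopposite)
  exact cubeGraph_isContained_of_prism hc (h.spoke_injective htri hc hN) (h.ne_spoke htri)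
    h.adj_succ hbb h.adj_spoke

end LengthFour

end IsSpokedCycle

/-- A connected cubic graph (finite or infinite) of girth 4 with a consistent 4-cycle
in which every edge lies on a 4-cycle is `K_{3,3}` or the cube. -/
theorem girth_four_consistent_cycle
    {V : Type*} (Γ : SimpleGraph V) (hconn : Γ.Connected)
    (hcubic : ∀ v : V, (Γ.neighborSet v).ncard = 3)
    (hgirth : Γ.egirth = 4)
    (hcons : HasConsistentCycle Γ 4)
    (hedge : ∀ u w : V, Γ.Adj u w → ∃ c : ZMod 4 → V, Function.Injective c ∧
      (∀ i, Γ.Adj (c i) (c (i + 1))) ∧ c 0 = u ∧ c 1 = w) :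
    Nonempty (Γ ≃g completeBipartiteGraph (Fin 3) (Fin 3)) ∨ Nonempty (Γ ≃g cubeGraph) := by
  obtain ⟨c, hc, hcc, γ, hγ⟩ := hcons
  have hedge' (u w : V) (huw : Γ.Adj u w) : LiesOnFourCycle Γ u w := by
    obtain ⟨d, hd, hadj, rfl, rfl⟩ := hedge u w huw
    exact liesOnFourCycle_of_injective hd hadj
  by_cases hN : Function.Injective Γ.neighborSet
  · right
    have htri : Γ.CliqueFree 3 :=
      cliqueFree_three_of_three_lt_egirth (hgirth ▸ by norm_num)
    obtain ⟨b, hb⟩ := exists_isSpokedCycle hcubic (by decide) hc hcc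
    obtain ⟨f⟩ := hb.cubeGraph_isContained htri hc hN hγ (hedge' _ _ (hb.adj_spoke 0))
    exact nonempty_iso_of_copy_of_regular hconn.preconnected three_ne_zero hcubic
      ncard_neighborSet_cubeGraph f
  · left
    obtain ⟨u, v, htwin, huv⟩ := Function.not_injective_iff.1 hN
    exact nonempty_iso_completeBipartiteGraph_of_twins hconn.preconnected hcubic hedge' huv htwin
end

section
/- Let s ≥ 3 and let Γ be a cubic simple graph of girth s+2 whose automorphism group acts transitively on the set of s-arcs of Γ. Then Γ contains a consistent cycle of length s+2. -/
open SimpleGraph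

/-- `x 0, x 1, …, x s` is an `s`-arc of `G`: consecutive vertices are adjacent and
`x i ≠ x (i+2)` whenever both are defined. -/
def IsNArc {V : Type*} (G : SimpleGraph V) (s : ℕ) (x : ℕ → V) : Prop :=
  (∀ i < s, G.Adj (x i) (x (i + 1))) ∧ ∀ i, i + 2 ≤ s → x i ≠ x (i + 2)

/-- The automorphism group of `G` acts transitively on the `s`-arcs of `G`. -/
def IsNArcTransitive {V : Type*} (G : SimpleGraph V) (s : ℕ) : Prop :=
  ∀ x y : ℕ → V, IsNArc G s x → IsNArc G s y → ∃ φ : G ≃g G, ∀ i ≤ s, φ (x i) = y i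
/-!
Rotating a cycle of length `s + 2` by one step takes one of its `s`-arcs to the next, so some
automorphism `φ` agrees with the rotation on `s + 1` of the vertices. It then agrees on the last
vertex `v` too: `φ v` and the successor of `v` are both common neighbors of the same two vertices
of the cycle, and two vertices have at most one common neighbor when there is no 4-cycle.
-/

section CycleGraph

variable {V : Type*} {G : SimpleGraph V} {n : ℕ}

lemma free_cycleGraph_of_lt_egirth (hn : 3 ≤ n) (h : n < G.egirth) : (cycleGraph n).Free G := by
  intro hcycle
  obtain ⟨v, p, hp, rfl⟩ := (cycleGraph_isContained_iff hn).mp hcycle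
  exact h.not_ge (egirth_le_length hp)

lemma cycleGraph_isContained_of_egirth_eq (h : G.egirth = n) : cycleGraph n ⊑ G := by
  have hn : 3 ≤ n := by exact_mod_cast h ▸ three_le_egirth (G := G)
  by_contra hnot
  have hacyclic : ¬ G.IsAcyclic := by simp [← egirth_eq_top, h]
  obtain ⟨v, p, hp, hlen⟩ := exists_egirth_eq_length.mpr hacyclic
  exact hnot ((cycleGraph_isContained_iff hn).mpr ⟨v, p, hp, by exact_mod_cast hlen.symm.trans h⟩)

lemma commonNeighbors_subsingleton_of_free_cycleGraph_four (h : (cycleGraph 4).Free G) {u v : V}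
    (huv : u ≠ v) : (G.commonNeighbors u v).Subsingleton := by
  rintro a ⟨hua, hva⟩ b ⟨hub, hvb⟩
  rw [mem_neighborSet] at hua hva hub hvb
  by_contra hab
  refine h ((cycleGraph_isContained_iff (by norm_num)).mpr
    ⟨u, .cons hua (.cons hva.symm (.cons hvb (.cons hub.symm .nil))), ?_, rfl⟩)
  simp [Walk.isCycle_iff_isPath_tail_and_le_length, hua.ne', hva.ne', hvb.ne, hub.ne', hab,
    huv.symm]

lemma exists_injective_zmod_of_cycleGraph_isContained (h : cycleGraph (n + 2) ⊑ G) :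
    ∃ c : ZMod (n + 2) → V, Function.Injective c ∧ ∀ i, G.Adj (c i) (c (i + 1)) := by
  obtain ⟨f⟩ := h
  exact ⟨f, f.injective, fun i ↦
    f.toHom.map_adj (cycleGraph_adj.mpr (.inr (add_sub_cancel_left i 1)))⟩

variable {c : ZMod n → V}

lemma isNArc_zmod_cycle (hinj : Function.Injective c) (hadj : ∀ i, G.Adj (c i) (c (i + 1)))
    (h2 : (2 : ZMod n) ≠ 0) (s : ℕ) (a : ZMod n) : IsNArc G s fun i ↦ c (a + i) := by
  refine ⟨fun i _ ↦ by simpa [add_assoc] using hadj (a + i), fun i _ h ↦ h2 ?_⟩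
  simpa using hinj h

lemma map_zmod_cycle_eq_of_forall_ne (hG : Pairwise fun u v ↦ (G.commonNeighbors u v).Subsingleton)
    (hinj : Function.Injective c) (hadj : ∀ i, G.Adj (c i) (c (i + 1))) (h2 : (2 : ZMod n) ≠ 0)
    {φ : G →g G} {j : ZMod n} (hφ : ∀ i ≠ j, φ (c i) = c (i + 1)) : φ (c j) = c (j + 1) := by
  have h1 : (1 : ZMod n) ≠ 0 := fun h ↦ h2 (by rw [← one_add_one_eq_two, h, add_zero])
  have hne : c j ≠ c (j + 1 + 1) := fun h ↦
    h2 (by simpa [add_assoc, one_add_one_eq_two] using hinj h)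
  have hpred : φ (c (j - 1)) = c j := by simpa using hφ (j - 1) (by simpa using h1)
  have hsucc : φ (c (j + 1)) = c (j + 1 + 1) := hφ (j + 1) (by simpa using h1)
  refine hG hne ⟨?_, ?_⟩ ⟨hadj j, (hadj (j + 1)).symm⟩
  · simpa [hpred] using φ.map_adj (hadj (j - 1))
  · simpa [hsucc] using (φ.map_adj (hadj j)).symm

end CycleGraph

lemma exists_le_natCast_eq_of_ne_neg_one {n : ℕ} {i : ZMod (n + 2)} (hi : i ≠ -1) :
    ∃ k ≤ n, (k : ZMod (n + 2)) = i := by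
  refine ⟨i.val, ?_, ZMod.natCast_zmod_val i⟩
  have hval : i.val ≠ n + 1 := fun h ↦ hi (ZMod.val_injective _ (h.trans (ZMod.val_neg_one _).symm))
  have := ZMod.val_lt i
  lia

theorem sArcTransitive_girth_s_plus_two_hasConsistentCycle_general
    {V : Type*} (Γ : SimpleGraph V) (s : ℕ) (hs : 1 ≤ s)
    (hfree : (cycleGraph 4).Free Γ)
    (hcycle : cycleGraph (s + 2) ⊑ Γ)
    (htrans : IsNArcTransitive Γ s) :
    HasConsistentCycle Γ (s + 2) := by
  obtain ⟨c, hinj, hadj⟩ := exists_injective_zmod_of_cycleGraph_isContained hcycle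
  have h2 : (2 : ZMod (s + 2)) ≠ 0 := fun h ↦ by
    have := Nat.le_of_dvd two_pos ((ZMod.natCast_eq_zero_iff 2 (s + 2)).mp h)
    lia
  obtain ⟨φ, hφ⟩ := htrans _ _ (isNArc_zmod_cycle hinj hadj h2 s 0)
    (isNArc_zmod_cycle hinj hadj h2 s 1)
  have hrot : ∀ i ≠ -1, φ (c i) = c (i + 1) := by
    intro i hi
    obtain ⟨k, hk, rfl⟩ := exists_le_natCast_eq_of_ne_neg_one hi
    simpa [add_comm] using hφ k hk
  have hlast : φ (c (-1)) = c (-1 + 1) :=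
    map_zmod_cycle_eq_of_forall_ne (φ := φ.toHom)
      (fun _ _ ↦ commonNeighbors_subsingleton_of_free_cycleGraph_four hfree) hinj hadj h2 hrot
  refine ⟨c, hinj, hadj, φ, fun i ↦ ?_⟩
  obtain rfl | hi := eq_or_ne i (-1)
  · exact hlast
  · exact hrot i hi

/-- For `s ≥ 3`, every cubic `s`-arc-transitive graph of girth `s + 2` contains a
consistent cycle of length `s + 2`. -/
theorem sArcTransitive_girth_s_plus_two_hasConsistentCycle
    {V : Type*} (Γ : SimpleGraph V) (s : ℕ) (hs : 3 ≤ s)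
    (hcubic : ∀ v : V, (Γ.neighborSet v).ncard = 3)
    (hgirth : Γ.egirth = (s + 2 : ℕ))
    (htrans : IsNArcTransitive Γ s) :
    HasConsistentCycle Γ (s + 2) :=
  sArcTransitive_girth_s_plus_two_hasConsistentCycle_general Γ s (by lia)
    (free_cycleGraph_of_lt_egirth (by lia) (by rw [hgirth]; exact_mod_cast (by lia : 4 < s + 2)))
    (cycleGraph_isContained_of_egirth_eq hgirth) htrans
end

section
/- Let s ≥ 3. Every connected cubic simple graph of girth 6 whose automorphism group acts transitively on the set of its s-arcs is finite; equivalently, there is no infinite connected cubic s-arc-transitive graph of girth 6. -/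
/-!
A 3-arc-transitive graph with two vertices at distance 3 has all its 3-arcs geodesic. So in the
cubic case a cycle of length at most 6 is a hexagon, and a vertex `u` of it has two neighbours
closer to the opposite vertex `v` than `u` is; by transitivity, the number of neighbours of `u`
closer to `v` is the same, and at least 2, for all `v`, `u` at distance 3. If it is 3, no two
vertices are at distance 4. If it is 2, then in every geodesic `o, a, c, p, w, t` the third
neighbours of `a` and of `w` are adjacent (`adj_third_neighbor`). When `v` and `u` are at
distance 6, applying this to five geodesics yields a vertex with three neighbours closer to one at
distance 3 from it, a contradiction. So no two vertices are at distance 6, and the graph is a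
finite ball.
-/

open SimpleGraph

section Distance

variable {V W : Type*} {G : SimpleGraph V} {H : SimpleGraph W} {u v : V} {n : ℕ}

theorem edist_hom_le (φ : G →g H) (u v : V) : H.edist (φ u) (φ v) ≤ G.edist u v :=
  le_iInf fun p ↦ by simpa using (p.map φ).edist_le

theorem dist_iso (φ : G ≃g H) (u v : V) : H.dist (φ u) (φ v) = G.dist u v := by
  have hsymm : G.edist u v ≤ H.edist (φ u) (φ v) := by
    simpa using edist_hom_le φ.symm.toHom (φ u) (φ v)
  exact congrArg ENat.toNat (le_antisymm (edist_hom_le φ.toHom u v) hsymm)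

theorem dist_le_dist_add_one (hc : G.Connected) {w : V} (h : G.Adj u w) :
    G.dist v w ≤ G.dist v u + 1 := by
  simpa [dist_eq_one_iff_adj.2 h] using hc.dist_triangle (u := v) (v := u) (w := w)

theorem dist_eq_length_of_dist_eq_add {w : V} (p : G.Walk v w) (q : G.Walk w u)
    (h : G.dist v u = p.length + q.length) :
    G.dist v w = p.length ∧ G.dist w u = q.length := by
  have hpq : (p.append q).length = G.dist v u := by rw [Walk.length_append, h]
  exact ⟨(length_eq_dist_of_subwalk hpq (Walk.isSubwalk_of_append_left rfl)).symm,
    (length_eq_dist_of_subwalk hpq (Walk.isSubwalk_of_append_right rfl)).symm⟩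

theorem exists_isNArc_forall_dist_eq (hc : G.Connected) (h : G.dist v u = n) :
    ∃ x : ℕ → V, IsNArc G n x ∧ x 0 = v ∧ x n = u ∧ ∀ i ≤ n, G.dist v (x i) = i := by
  obtain ⟨p, hp⟩ := hc.exists_walk_length_eq_dist v u
  have hlen : p.length = n := hp.trans h
  have hdist (i : ℕ) (hi : i ≤ n) : G.dist v (p.getVert i) = i := by
    rw [← length_eq_dist_of_subwalk hp (p.isSubwalk_take i), Walk.take_length]
    omega
  refine ⟨p.getVert, ⟨fun i hi ↦ p.adj_getVert_succ (by omega), fun i hi heq ↦ ?_⟩,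
    p.getVert_zero, hlen ▸ p.getVert_length, hdist⟩
  have := hdist i (by omega)
  rw [heq, hdist (i + 2) hi] at this
  omega

theorem commonNeighbors_nonempty_of_dist_eq_two (hc : G.Connected) (h : G.dist v u = 2) :
    (G.commonNeighbors v u).Nonempty := by
  obtain ⟨x, hx, rfl, rfl, -⟩ := exists_isNArc_forall_dist_eq hc h
  exact ⟨x 1, hx.1 0 two_pos, (hx.1 1 one_lt_two).symm⟩

theorem finite_setOf_dist_le_s12 (hc : G.Connected) (hfin : ∀ v, (G.neighborSet v).Finite)
    (v : V) (n : ℕ) : {u | G.dist v u ≤ n}.Finite := by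
  induction n with
  | zero =>
    refine (Set.finite_singleton v).subset fun u hu ↦ ?_
    exact (hc.dist_eq_zero_iff.1 (Nat.le_zero.1 hu)).symm
  | succ n ih =>
    refine (ih.union (ih.biUnion fun t _ ↦ hfin t)).subset fun u hu ↦ ?_
    rcases Nat.le_succ_iff.1 hu with hle | heq
    · exact .inl hle
    · obtain ⟨x, hx, -, rfl, hdist⟩ := exists_isNArc_forall_dist_eq hc heq
      exact .inr (Set.mem_biUnion (hdist n n.le_succ).le (hx.1 n n.lt_succ_self))

theorem finite_of_forall_dist_ne (hc : G.Connected) (hfin : ∀ v, (G.neighborSet v).Finite)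
    (h : ∀ u, G.dist v u ≠ n) : Finite V := by
  refine Set.finite_univ_iff.1 ((finite_setOf_dist_le_s12 hc hfin v n).subset fun u _ ↦ ?_)
  by_contra hu
  obtain ⟨x, -, -, -, hdist⟩ := exists_isNArc_forall_dist_eq hc (rfl : G.dist v u = _)
  exact h (x n) (hdist n (not_le.1 hu).le)

end Distance

section CloserNeighbors

variable {V : Type*} {G : SimpleGraph V} {u v : V}

/-- The neighbours of `u` that are closer to `v` than `u` is. In a distance-regular graph their
number is the intersection number `c_i`, where `i` is the distance from `v` to `u`. -/
def closerNeighbors (G : SimpleGraph V) (v u : V) : Set V :=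
  {t | G.Adj u t ∧ G.dist v t < G.dist v u}

theorem closerNeighbors_subset : closerNeighbors G v u ⊆ G.neighborSet u :=
  fun _ h ↦ h.1

theorem ncard_closerNeighbors_iso (φ : G ≃g G) (v u : V) :
    (closerNeighbors G (φ v) (φ u)).ncard = (closerNeighbors G v u).ncard := by
  have himage : closerNeighbors G (φ v) (φ u) = φ '' closerNeighbors G v u := by
    ext t
    obtain ⟨t, rfl⟩ := φ.surjective t
    simp [closerNeighbors, dist_iso, φ.map_adj_iff]
  rw [himage, Set.ncard_image_of_injective _ φ.injective]

theorem ncard_closerNeighbors_lt {s : V} (hfin : (G.neighborSet u).Finite) (hus : G.Adj u s)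
    (hs : G.dist v u ≤ G.dist v s) :
    (closerNeighbors G v u).ncard < (G.neighborSet u).ncard :=
  Set.ncard_lt_ncard (Set.ssubset_iff_of_subset closerNeighbors_subset |>.2
    ⟨s, hus, fun h ↦ hs.not_gt h.2⟩) hfin

theorem mem_closerNeighbors_of_ne {s t : V} (hfin : (G.neighborSet u).Finite)
    (hcard : (G.neighborSet u).ncard ≤ (closerNeighbors G v u).ncard + 1)
    (hus : G.Adj u s) (hs : G.dist v u ≤ G.dist v s) (hut : G.Adj u t) (hts : t ≠ s) :
    t ∈ closerNeighbors G v u := by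
  have hsub : closerNeighbors G v u ⊆ G.neighborSet u \ {s} := fun r hr ↦
    ⟨hr.1, fun hrs ↦ hs.not_gt (hrs ▸ hr.2)⟩
  have hdiff := Set.ncard_sdiff_singleton_add_one (show s ∈ G.neighborSet u from hus) hfin
  rw [Set.eq_of_subset_of_ncard_le hsub (by omega) hfin.sdiff]
  exact ⟨hut, hts⟩

theorem mem_closerNeighbors_of_mem_commonNeighbors {s t : V} (hvu : G.dist v u = 3)
    (hs : s ∈ G.commonNeighbors v t) (hut : G.Adj u t) : t ∈ closerNeighbors G v u := by
  have : G.dist v t ≤ 2 := dist_le (.cons hs.1 hs.2.symm.toWalk)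
  exact ⟨hut, by omega⟩

end CloserNeighbors

section Arcs

variable {V : Type*} {G : SimpleGraph V} {m n : ℕ} {x : ℕ → V}

theorem IsNArc.mono (hx : IsNArc G n x) (hmn : m ≤ n) : IsNArc G m x :=
  ⟨fun i hi ↦ hx.1 i (hi.trans_le hmn), fun i hi ↦ hx.2 i (hi.trans hmn)⟩

theorem IsNArc.exists_extension (hx : IsNArc G n x) (hdeg : 1 < (G.neighborSet (x n)).ncard) :
    ∃ y, IsNArc G (n + 1) y ∧ ∀ i ≤ n, y i = x i := by
  obtain ⟨z, hz, hne⟩ := Set.exists_ne_of_one_lt_ncard hdeg (x (n - 1))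
  have hold : ∀ i ≤ n, Function.update x (n + 1) z i = x i := fun i hi ↦
    Function.update_of_ne (by omega) _ _
  refine ⟨Function.update x (n + 1) z, ⟨fun i hi ↦ ?_, fun i hi ↦ ?_⟩, hold⟩
  · rw [hold i (by omega)]
    rcases Nat.lt_succ_iff_lt_or_eq.1 hi with hlt | rfl
    · rw [hold (i + 1) hlt]
      exact hx.1 i hlt
    · rwa [Function.update_self]
  · rw [hold i (by omega)]
    rcases Nat.le_succ_iff.1 hi with hle | heq
    · rw [hold (i + 2) hle]
      exact hx.2 i hle
    · obtain rfl : n = i + 1 := by omega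
      rw [Function.update_self]
      exact hne.symm

theorem IsNArcTransitive.mono (ht : IsNArcTransitive G n)
    (hdeg : ∀ v, 1 < (G.neighborSet v).ncard) (hmn : m ≤ n) : IsNArcTransitive G m := by
  induction n, hmn using Nat.le_induction with
  | base => exact ht
  | succ n _ ih =>
    refine ih fun x y hx hy ↦ ?_
    obtain ⟨x', hx', hxx'⟩ := hx.exists_extension (hdeg _)
    obtain ⟨y', hy', hyy'⟩ := hy.exists_extension (hdeg _)
    obtain ⟨φ, hφ⟩ := ht x' y' hx' hy'
    exact ⟨φ, fun i hi ↦ by rw [← hxx' i hi, ← hyy' i hi, hφ i (by omega)]⟩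

theorem isNArc_getVert_of_isCycle {u : V} {w : G.Walk u u} (hw : w.IsCycle) :
    IsNArc G w.length w.getVert :=
  ⟨fun _ hi ↦ w.adj_getVert_succ hi, fun i hi ↦
    hw.getVert_sub_one_ne_getVert_add_one (i := i + 1) (by omega)⟩

/-- Every `n`-arc of `G` is a shortest path between its ends. -/
def NArcsGeodesic (G : SimpleGraph V) (n : ℕ) : Prop :=
  ∀ x : ℕ → V, IsNArc G n x → G.dist (x 0) (x n) = n

theorem IsNArcTransitive.exists_iso_of_dist_eq (ht : IsNArcTransitive G n) (hc : G.Connected)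
    {u v u' v' : V} (h : G.dist v u = n) (h' : G.dist v' u' = n) :
    ∃ φ : G ≃g G, φ v = v' ∧ φ u = u' := by
  obtain ⟨x, hx, rfl, rfl, -⟩ := exists_isNArc_forall_dist_eq hc h
  obtain ⟨y, hy, rfl, rfl, -⟩ := exists_isNArc_forall_dist_eq hc h'
  obtain ⟨φ, hφ⟩ := ht x y hx hy
  exact ⟨φ, hφ 0 n.zero_le, hφ n le_rfl⟩

theorem IsNArcTransitive.nArcsGeodesic (ht : IsNArcTransitive G n) (hc : G.Connected)
    {u v : V} (h : G.dist v u = n) : NArcsGeodesic G n := by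
  intro y hy
  obtain ⟨x, hx, rfl, rfl, -⟩ := exists_isNArc_forall_dist_eq hc h
  obtain ⟨φ, hφ⟩ := ht x y hx hy
  rw [← hφ 0 n.zero_le, ← hφ n le_rfl, dist_iso, h]

theorem NArcsGeodesic.two_le_ncard_closerNeighbors (hgeo : NArcsGeodesic G n) {u : V}
    {w : G.Walk u u} (hw : w.IsCycle) (hn : n ≤ w.length) (hlen : w.length ≤ 2 * n)
    (hfin : (G.neighborSet (w.getVert n)).Finite) :
    2 ≤ (closerNeighbors G u (w.getVert n)).ncard := by
  have harc := isNArc_getVert_of_isCycle hw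
  have hthree := hw.three_le_length
  have hdist : G.dist u (w.getVert n) = n := by
    simpa using hgeo w.getVert (harc.mono hn)
  have hback : G.dist u (w.getVert n) ≤ w.length - n := by
    simpa [dist_comm] using dist_le (w.drop n)
  obtain ⟨k, rfl⟩ : ∃ k, n = k + 1 := ⟨n - 1, by omega⟩
  have hprev : w.getVert k ∈ closerNeighbors G u (w.getVert (k + 1)) := by
    refine ⟨(harc.1 k (by omega)).symm, ?_⟩
    have : G.dist u (w.getVert k) ≤ k := (dist_le (w.take k)).trans (by simp)
    omega
  have hnext : w.getVert (k + 2) ∈ closerNeighbors G u (w.getVert (k + 1)) := by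
    refine ⟨harc.1 (k + 1) (by omega), ?_⟩
    have : G.dist u (w.getVert (k + 2)) ≤ w.length - (k + 2) := by
      simpa [dist_comm] using dist_le (w.drop (k + 2))
    omega
  exact (Set.one_lt_ncard (hfin.subset closerNeighbors_subset)).2
    ⟨_, hprev, _, hnext, harc.2 k (by omega)⟩

theorem IsNArcTransitive.two_le_ncard_closerNeighbors (ht : IsNArcTransitive G n)
    (hc : G.Connected) (hfin : ∀ v, (G.neighborSet v).Finite) {a : V} {w : G.Walk a a}
    (hw : w.IsCycle) (hn : n ≤ w.length) (hlen : w.length ≤ 2 * n) {u v : V}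
    (hvu : G.dist v u = n) : 2 ≤ (closerNeighbors G v u).ncard := by
  have hgeo := ht.nArcsGeodesic hc hvu
  have hdist : G.dist a (w.getVert n) = n := by
    simpa using hgeo w.getVert ((isNArc_getVert_of_isCycle hw).mono hn)
  obtain ⟨φ, rfl, rfl⟩ := ht.exists_iso_of_dist_eq hc hdist hvu
  rw [ncard_closerNeighbors_iso]
  exact hgeo.two_le_ncard_closerNeighbors hw hn hlen (hfin _)

theorem NArcsGeodesic.dist_eq_three (hgeo : NArcsGeodesic G 3) {a b c d : V} (hab : G.Adj a b)
    (hbc : G.Adj b c) (hcd : G.Adj c d) (hac : a ≠ c) (hbd : b ≠ d) : G.dist a d = 3 := by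
  refine hgeo (fun i ↦ [a, b, c, d].getD i d) ⟨fun i hi ↦ ?_, fun i hi ↦ ?_⟩
  · interval_cases i <;> assumption
  · obtain rfl | rfl : i = 0 ∨ i = 1 := by omega
    exacts [hac, hbd]

theorem NArcsGeodesic.eq_of_commonNeighbors (hgeo : NArcsGeodesic G 3) {a b c c' : V}
    (hab : a ≠ b) (hc : c ∈ G.commonNeighbors a b) (hc' : c' ∈ G.commonNeighbors a b) :
    c = c' := by
  by_contra hne
  have hdist := hgeo.dist_eq_three hc.1 hc.2.symm hc'.2 hab hne
  have := dist_eq_one_iff_adj.2 hc'.1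
  omega

end Arcs

section Cubic

variable {V : Type*} {G : SimpleGraph V}

theorem exists_adj_ne_ne {a : V} (hcard : 2 < (G.neighborSet a).ncard) (b c : V) :
    ∃ d, G.Adj a d ∧ d ≠ b ∧ d ≠ c := by
  have hpair : ({b, c} : Set V).ncard ≤ 2 := by
    simpa using Set.ncard_insert_le b {c}
  obtain ⟨d, hd, hne⟩ := Set.exists_mem_notMem_of_ncard_lt_ncard (hpair.trans_lt hcard)
  exact ⟨d, hd, by simpa using hne⟩

theorem eq_of_adj_ne_ne {a b c d e : V} (hcard : (G.neighborSet a).ncard = 3) (hab : G.Adj a b)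
    (hac : G.Adj a c) (hbc : b ≠ c) (hd : G.Adj a d ∧ d ≠ b ∧ d ≠ c)
    (he : G.Adj a e ∧ e ≠ b ∧ e ≠ c) : d = e := by
  have hsub : {b, c} ⊆ G.neighborSet a := Set.insert_subset hab (Set.singleton_subset_iff.2 hac)
  have hone : (G.neighborSet a \ {b, c}).ncard = 1 := by
    rw [Set.ncard_sdiff hsub, hcard, Set.ncard_pair hbc]
  obtain ⟨f, hf⟩ := Set.ncard_eq_one.1 hone
  have hthird {g : V} (hg : G.Adj a g ∧ g ≠ b ∧ g ≠ c) : g = f :=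
    Set.eq_of_mem_singleton (hf ▸ ⟨hg.1, by simpa using hg.2⟩)
  exact (hthird hd).trans (hthird he).symm

theorem adj_third_neighbor (hc : G.Connected) (hcubic : ∀ v, (G.neighborSet v).ncard = 3)
    (hgeo : NArcsGeodesic G 3)
    (htwo : ∀ v u, G.dist v u = 3 → (closerNeighbors G v u).ncard = 2)
    {o a c p w t y z : V} (hoa : G.Adj o a) (hac : G.Adj a c) (hcp : G.Adj c p)
    (hpw : G.Adj p w) (hwt : G.Adj w t) (hot : G.dist o t = 5)
    (hay : G.Adj a y) (hyo : y ≠ o) (hyc : y ≠ c)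
    (hwz : G.Adj w z) (hzp : z ≠ p) (hzt : z ≠ t) : G.Adj y z := by
  have dist_ow : G.dist o w = 4 := (dist_eq_length_of_dist_eq_add
    (.cons hoa (.cons hac (.cons hcp hpw.toWalk))) hwt.toWalk hot).1
  have dist_wa : G.dist w a = 3 := SimpleGraph.dist_comm.trans (dist_eq_length_of_dist_eq_add
    hoa.toWalk (.cons hac (.cons hcp hpw.toWalk)) dist_ow).2
  have hnodup : [o, a, c, p, w, t].Nodup := (Walk.isPath_of_length_eq_dist
    (.cons hoa (.cons hac (.cons hcp (.cons hpw hwt.toWalk)))) hot.symm).support_nodup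
  have hap : a ≠ p := by grind
  have hpt : p ≠ t := by grind
  have hy : y ∈ closerNeighbors G w a :=
    mem_closerNeighbors_of_ne (Set.finite_of_ncard_ne_zero (by simp [hcubic]))
      (by rw [hcubic, htwo w a dist_wa]) hoa.symm (by rw [dist_wa, SimpleGraph.dist_comm]; omega)
      hay hyo
  have dist_wy : G.dist w y = 2 := by
    have := dist_le_dist_add_one hc (v := w) hay.symm
    have := hy.2
    omega
  obtain ⟨r, hwr, hyr⟩ := commonNeighbors_nonempty_of_dist_eq_two hc dist_wy
  have hrp : r ≠ p := by
    rintro rfl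
    exact hyc (hgeo.eq_of_commonNeighbors hap ⟨hay, hyr.symm⟩ ⟨hac, hcp.symm⟩)
  have hrt : r ≠ t := by
    rintro rfl
    have : G.dist o r ≤ 3 := dist_le (.cons hoa (.cons hay hyr.toWalk))
    omega
  exact eq_of_adj_ne_ne (hcubic w) hpw.symm hwt hpt
    ⟨hwr, hrp, hrt⟩ ⟨hwz, hzp, hzt⟩ ▸ hyr

theorem exists_two_geodesics (hc : G.Connected) (hgeo : NArcsGeodesic G 3) {v p : V}
    (htwo : 2 ≤ (closerNeighbors G v p).ncard) (hvp : G.dist v p = 3) :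
    ∃ a c b d, G.Adj v a ∧ G.Adj a c ∧ G.Adj c p ∧ G.Adj v b ∧ G.Adj b d ∧ G.Adj d p ∧
      a ≠ b ∧ c ≠ d := by
  have hmid {q : V} (hq : q ∈ closerNeighbors G v p) : (G.commonNeighbors v q).Nonempty := by
    have := dist_le_dist_add_one hc (v := v) hq.1.symm
    exact commonNeighbors_nonempty_of_dist_eq_two hc (by have := hq.2; omega)
  obtain ⟨c, hcp, d, hdp, hcd⟩ :=
    (Set.one_lt_ncard (Set.finite_of_ncard_ne_zero (by omega))).1 htwo
  obtain ⟨a, hva, hca⟩ := hmid hcp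
  obtain ⟨b, hvb, hdb⟩ := hmid hdp
  refine ⟨a, c, b, d, hva, hca.symm, hcp.1.symm, hvb, hdb.symm, hdp.1.symm, ?_, hcd⟩
  rintro rfl
  have hap : a ≠ p := by
    rintro rfl
    have := dist_eq_one_iff_adj.2 hva
    omega
  exact hcd (hgeo.eq_of_commonNeighbors hap ⟨hca.symm, hcp.1⟩ ⟨hdb.symm, hdp.1⟩)

theorem adj_third_neighbor_of_dist_eq_six (hc : G.Connected)
    (hcubic : ∀ v, (G.neighborSet v).ncard = 3) (hgeo : NArcsGeodesic G 3)
    (htwo : ∀ v u, G.dist v u = 3 → (closerNeighbors G v u).ncard = 2)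
    {v a c b d p w t u y z : V} (hva : G.Adj v a) (hac : G.Adj a c) (hcp : G.Adj c p)
    (hvb : G.Adj v b) (hbd : G.Adj b d) (hdp : G.Adj d p) (hcd : c ≠ d)
    (hpw : G.Adj p w) (hwt : G.Adj w t) (htu : G.Adj t u) (hvu : G.dist v u = 6)
    (hay : G.Adj a y) (hyv : y ≠ v) (hyc : y ≠ c)
    (hdz : G.Adj d z) (hzb : z ≠ b) (hzp : z ≠ p) : G.Adj y z := by
  have dist_vt : G.dist v t = 5 := (dist_eq_length_of_dist_eq_add
    (.cons hva (.cons hac (.cons hcp (.cons hpw hwt.toWalk)))) htu.toWalk hvu).1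
  have dist_au : G.dist a u = 5 := (dist_eq_length_of_dist_eq_add
    hva.toWalk (.cons hac (.cons hcp (.cons hpw (.cons hwt htu.toWalk)))) hvu).2
  have dist_bu : G.dist b u = 5 := (dist_eq_length_of_dist_eq_add
    hvb.toWalk (.cons hbd (.cons hdp (.cons hpw (.cons hwt htu.toWalk)))) hvu).2
  obtain ⟨c', hcc', hc'a, hc'p⟩ := exists_adj_ne_ne (by rw [hcubic c]; norm_num) a p
  obtain ⟨t', htt', ht'w, ht'u⟩ := exists_adj_ne_ne (by rw [hcubic t]; norm_num) w u
  have hc't' : G.Adj c' t' := adj_third_neighbor hc hcubic hgeo htwo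
    hac hcp hpw hwt htu dist_au hcc' hc'a hc'p htt' ht'w ht'u
  have hzt' : G.Adj z t' := adj_third_neighbor hc hcubic hgeo htwo
    hbd hdp hpw hwt htu dist_bu hdz hzb hzp htt' ht'w ht'u
  have hzc' : z ≠ c' := by
    rintro rfl
    exact hzp (hgeo.eq_of_commonNeighbors hcd ⟨hcc', hdz⟩ ⟨hcp, hdp⟩)
  have hzt : z ≠ t := by
    rintro rfl
    have : G.dist v z ≤ 3 := dist_le (.cons hvb (.cons hbd hdz.toWalk))
    omega
  exact adj_third_neighbor hc hcubic hgeo htwo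
    hva hac hcc' hc't' htt'.symm dist_vt hay hyv hyc hzt'.symm hzc' hzt

theorem dist_ne_six_of_ncard_closerNeighbors (hc : G.Connected)
    (hcubic : ∀ v, (G.neighborSet v).ncard = 3) (hgeo : NArcsGeodesic G 3)
    (htwo : ∀ v u, G.dist v u = 3 → (closerNeighbors G v u).ncard = 2) (v u : V) :
    G.dist v u ≠ 6 := by
  intro hvu
  obtain ⟨p, w, t, hvp, hpw, hwt, htu⟩ : ∃ p w t, G.dist v p = 3 ∧
      G.Adj p w ∧ G.Adj w t ∧ G.Adj t u := by
    obtain ⟨x, hx, -, rfl, hdist⟩ := exists_isNArc_forall_dist_eq hc hvu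
    exact ⟨x 3, x 4, x 5, hdist 3 (by omega), hx.1 3 (by omega), hx.1 4 (by omega),
      hx.1 5 (by omega)⟩
  obtain ⟨a, c, b, d, hva, hac, hcp, hvb, hbd, hdp, hab, hcd⟩ :=
    exists_two_geodesics hc hgeo (htwo v p hvp).ge hvp
  have dist_vt : G.dist v t = 5 := (dist_eq_length_of_dist_eq_add
    (.cons hva (.cons hac (.cons hcp (.cons hpw hwt.toWalk)))) htu.toWalk hvu).1
  obtain ⟨a', haa', ha'v, ha'c⟩ := exists_adj_ne_ne (by rw [hcubic a]; norm_num) v c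
  obtain ⟨b', hbb', hb'v, hb'd⟩ := exists_adj_ne_ne (by rw [hcubic b]; norm_num) v d
  obtain ⟨d', hdd', hd'b, hd'p⟩ := exists_adj_ne_ne (by rw [hcubic d]; norm_num) b p
  obtain ⟨w', hww', hw'p, hw't⟩ := exists_adj_ne_ne (by rw [hcubic w]; norm_num) p t
  have ha'w' : G.Adj a' w' := adj_third_neighbor hc hcubic hgeo htwo
    hva hac hcp hpw hwt dist_vt haa' ha'v ha'c hww' hw'p hw't
  have hb'w' : G.Adj b' w' := adj_third_neighbor hc hcubic hgeo htwo
    hvb hbd hdp hpw hwt dist_vt hbb' hb'v hb'd hww' hw'p hw't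
  have ha'd' : G.Adj a' d' := adj_third_neighbor_of_dist_eq_six hc hcubic hgeo htwo
    hva hac hcp hvb hbd hdp hcd hpw hwt htu hvu haa' ha'v ha'c hdd' hd'b hd'p
  have dist_a'b : G.dist a' b = 3 := hgeo.dist_eq_three haa'.symm hva.symm hvb ha'v hab
  have hvd : v ≠ d := by
    rintro rfl
    have := dist_eq_one_iff_adj.2 hdp
    omega
  have hthree : 2 < (closerNeighbors G a' b).ncard :=
    (Set.two_lt_ncard (Set.finite_of_ncard_ne_zero (by simp [htwo a' b dist_a'b]))).2
      ⟨v, mem_closerNeighbors_of_mem_commonNeighbors dist_a'b ⟨haa'.symm, hva⟩ hvb.symm,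
        b', mem_closerNeighbors_of_mem_commonNeighbors dist_a'b ⟨ha'w', hb'w'⟩ hbb',
        d, mem_closerNeighbors_of_mem_commonNeighbors dist_a'b ⟨ha'd', hdd'⟩ hbd,
        hb'v.symm, hvd, hb'd⟩
  exact hthree.ne' (htwo a' b dist_a'b)

theorem dist_ne_six_of_egirth_le_six (hc : G.Connected)
    (hcubic : ∀ v, (G.neighborSet v).ncard = 3) (ht : IsNArcTransitive G 3) (hg : G.egirth ≤ 6)
    (v u : V) : G.dist v u ≠ 6 := by
  intro hvu
  have hfin (v : V) : (G.neighborSet v).Finite := Set.finite_of_ncard_ne_zero (by simp [hcubic])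
  obtain ⟨x, hx, -, -, hdist⟩ := exists_isNArc_forall_dist_eq hc hvu
  have hthree : G.dist v (x 3) = 3 := hdist 3 (by omega)
  have hacyclic : ¬ G.IsAcyclic := fun h ↦ by simp [egirth_eq_top.2 h] at hg
  obtain ⟨a, w, hw, hlen⟩ := exists_egirth_eq_length.2 hacyclic
  have hwlen : w.length ≤ 2 * 3 := by rw [hlen] at hg; exact_mod_cast hg
  have htwo : 2 ≤ (closerNeighbors G v (x 3)).ncard :=
    ht.two_le_ncard_closerNeighbors hc hfin hw hw.three_le_length hwlen hthree
  have hlt : (closerNeighbors G v (x 3)).ncard < 3 :=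
    (ncard_closerNeighbors_lt (hfin _) (hx.1 3 (by omega)) (by simp [hdist])).trans_eq (hcubic _)
  have hconst (v' u' : V) (h : G.dist v' u' = 3) : (closerNeighbors G v' u').ncard = 2 := by
    obtain ⟨φ, rfl, rfl⟩ := ht.exists_iso_of_dist_eq hc hthree h
    rw [ncard_closerNeighbors_iso]
    omega
  exact dist_ne_six_of_ncard_closerNeighbors hc hcubic (ht.nArcsGeodesic hc hthree) hconst v u hvu

end Cubic

theorem finite_of_sArcTransitive_girth_six_general {V : Type*} (Γ : SimpleGraph V) (s : ℕ)
    (hs : 3 ≤ s) (hconn : Γ.Connected) (hcubic : ∀ v : V, (Γ.neighborSet v).ncard = 3)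
    (hgirth : Γ.egirth ≤ 6) (htrans : IsNArcTransitive Γ s) : Finite V := by
  have hthree : IsNArcTransitive Γ 3 := htrans.mono (fun v ↦ by rw [hcubic v]; norm_num) hs
  have hfin (v : V) : (Γ.neighborSet v).Finite := Set.finite_of_ncard_ne_zero (by simp [hcubic])
  obtain ⟨v⟩ := hconn.nonempty
  exact finite_of_forall_dist_ne hconn hfin
    (dist_ne_six_of_egirth_le_six hconn hcubic hthree hgirth v)

/-- For `s ≥ 3`, every connected cubic `s`-arc-transitive graph of girth 6 is finite;
equivalently, there is no infinite connected cubic `s`-arc-transitive graph of girth 6. -/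
theorem finite_of_sArcTransitive_girth_six
    {V : Type*} (Γ : SimpleGraph V) (s : ℕ) (hs : 3 ≤ s)
    (hconn : Γ.Connected)
    (hcubic : ∀ v : V, (Γ.neighborSet v).ncard = 3)
    (hgirth : Γ.egirth = 6)
    (htrans : IsNArcTransitive Γ s) :
    Finite V := by
  exact finite_of_sArcTransitive_girth_six_general Γ s hs hconn hcubic hgirth.le htrans
end

section
/- No connected cubic simple graph of girth 6 is 5-arc-regular; that is, every connected cubic arc-transitive graph of girth 6 is s-arc-regular for some s ≤ 4. -/
open SimpleGraph

/-- `G` is `s`-arc-regular: its automorphism group acts transitively on `s`-arcs and the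
only automorphism fixing an `s`-arc pointwise is the identity. -/
def IsNArcRegular {V : Type*} (G : SimpleGraph V) (s : ℕ) : Prop :=
  IsNArcTransitive G s ∧
    ∀ (φ : G ≃g G) (x : ℕ → V), IsNArc G s x → (∀ i ≤ s, φ (x i) = x i) → ∀ v, φ v = v

/-!
Let `x` and `y` be `(s + 1)`-arcs which differ only in their last vertex, with `x` on a shortest
cycle, of length `g`. An automorphism taking `x` to `y` carries that cycle to a second one through
`x 0, …, x s`, and the two complementary paths, each of length `g - s`, contain a cycle. Hence
`g ≤ 2 * (g - s)`, which is Tutte's bound: an `s`-arc-transitive graph of minimum degree at least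
`3` satisfies `2 * s ≤ g + 2`.

So a cubic arc-transitive graph with a cycle has a largest `s` for which it is `s`-arc-transitive.
If some automorphism fixed an `s`-arc but moved a continuation of it, it would swap the two
continuations and the graph would be `(s + 1)`-arc-transitive. Hence an automorphism fixing an
`s`-arc fixes all its continuations, in both directions, and so every vertex.
-/

theorem eq_or_eq_of_mem_of_ncard_eq_three {α : Type*} {S : Set α} (hS : S.ncard = 3) {a b c d : α}
    (ha : a ∈ S) (hb : b ∈ S) (hc : c ∈ S) (hd : d ∈ S) (hab : a ≠ b) (hac : a ≠ c) (hbc : b ≠ c)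
    (had : a ≠ d) : d = b ∨ d = c := by
  obtain ⟨x, y, z, -, -, -, rfl⟩ := Set.ncard_eq_three.1 hS
  grind

section NArc

variable {V : Type*} {G : SimpleGraph V} {s t : ℕ} {x : ℕ → V} {v : V}

namespace IsNArc

theorem mono_s14 (hx : IsNArc G t x) (hst : s ≤ t) : IsNArc G s x :=
  ⟨fun i hi => hx.1 i (hi.trans_le hst), fun i hi => hx.2 i (hi.trans hst)⟩

theorem tail (hx : IsNArc G (s + 1) x) : IsNArc G s fun i => x (i + 1) :=
  ⟨fun i hi => hx.1 (i + 1) (by omega), fun i hi => hx.2 (i + 1) (by omega)⟩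

theorem reverse (hx : IsNArc G s x) : IsNArc G s fun i => x (s - i) := by
  refine ⟨fun i hi => ?_, fun i hi => ?_⟩
  · have hadj := hx.1 (s - (i + 1)) (by omega)
    rw [show s - (i + 1) + 1 = s - i by omega] at hadj
    exact hadj.symm
  · have hne := hx.2 (s - (i + 2)) (by omega)
    rw [show s - (i + 2) + 2 = s - i by omega] at hne
    exact hne.symm

/-- For `s = 0` the condition `x (s - 1) ≠ v` reads `x 0 ≠ v` and follows from adjacency. -/
theorem update_succ (hx : IsNArc G s x) (hadj : G.Adj (x s) v) (hne : x (s - 1) ≠ v) :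
    IsNArc G (s + 1) (Function.update x (s + 1) v) := by
  refine ⟨fun i hi => ?_, fun i hi => ?_⟩
  · rw [Function.update_of_ne hi.ne]
    obtain rfl | his := eq_or_ne i s
    · rwa [Function.update_self]
    · rw [Function.update_of_ne (by omega)]
      exact hx.1 i (by omega)
  · rw [Function.update_of_ne (by omega : i ≠ s + 1)]
    obtain rfl | his := eq_or_ne s (i + 1)
    · rwa [Function.update_self]
    · rw [Function.update_of_ne (by omega)]
      exact hx.2 i (by omega)

theorem exists_update_succ (hx : IsNArc G s x) (hG : (G.neighborSet (x s)).Nontrivial) :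
    ∃ v, IsNArc G (s + 1) (Function.update x (s + 1) v) := by
  obtain ⟨v, hadj, hne⟩ := hG.exists_ne (x (s - 1))
  exact ⟨v, hx.update_succ hadj hne.symm⟩

end IsNArc

theorem isNArc_getVert_of_isCycle_s14 {c : G.Walk v v} (hc : c.IsCycle) :
    IsNArc G c.length c.getVert := by
  refine ⟨fun i hi => c.adj_getVert_succ hi, fun i hi heq => ?_⟩
  have := hc.three_le_length
  obtain rfl | hpos := i.eq_zero_or_pos
  · have : 0 = 2 := hc.getVert_injOn' (show 0 ≤ c.length - 1 by omega)
      (show 2 ≤ c.length - 1 by omega) heq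
    omega
  · have : i = i + 2 := hc.getVert_injOn (show 1 ≤ i ∧ i ≤ c.length by omega)
      (show 1 ≤ i + 2 ∧ i + 2 ≤ c.length by omega) heq
    omega

namespace IsNArcTransitive

theorem of_succ (ht : IsNArcTransitive G (s + 1)) (hG : ∀ v, (G.neighborSet v).Nontrivial) :
    IsNArcTransitive G s := by
  intro x y hx hy
  obtain ⟨u, hu⟩ := hx.exists_update_succ (hG _)
  obtain ⟨w, hw⟩ := hy.exists_update_succ (hG _)
  obtain ⟨φ, hφ⟩ := ht _ _ hu hw
  refine ⟨φ, fun i hi => ?_⟩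
  have hne : i ≠ s + 1 := by omega
  simpa only [Function.update_of_ne hne] using hφ i (by omega)

theorem of_le (ht : IsNArcTransitive G t) (hst : s ≤ t) (hG : ∀ v, (G.neighborSet v).Nontrivial) :
    IsNArcTransitive G s :=
  Nat.decreasingInduction (fun _ _ h => h.of_succ hG) ht hst

theorem egirth_le_of_isCycle (ht : IsNArcTransitive G (s + 2))
    (hG : ∀ v, 2 < (G.neighborSet v).encard) {c : G.Walk v v} (hc : c.IsCycle)
    (hs : s + 2 ≤ c.length) : G.egirth ≤ ((2 * (c.length - (s + 1)) : ℕ) : ℕ∞) := by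
  have harc : IsNArc G (s + 2) c.getVert := (isNArc_getVert_of_isCycle_s14 hc).mono_s14 hs
  obtain ⟨z, hadj, hz⟩ : ∃ z ∈ G.neighborSet (c.getVert (s + 1)),
      z ∉ ({c.getVert s, c.getVert (s + 2)} : Set V) :=
    Set.not_subset.1 fun hsub =>
      ((hG _).trans_le (Set.encard_le_encard hsub)).not_ge <| by
        simpa [one_add_one_eq_two] using Set.encard_insert_le {c.getVert (s + 2)} (c.getVert s)
  rw [Set.mem_insert_iff, Set.mem_singleton_iff, not_or] at hz
  obtain ⟨φ, hφ⟩ := ht _ _ harc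
    ((harc.mono_s14 (Nat.le_succ (s + 1))).update_succ hadj (Ne.symm hz.1))
  have hstart : φ (c.getVert (s + 1)) = c.getVert (s + 1) := by simpa using hφ (s + 1) (by omega)
  have hnext : φ (c.getVert (s + 2)) = z := by simpa using hφ (s + 2) le_rfl
  have hend : φ v = v := by simpa using hφ 0 (by omega)
  let p := c.drop (s + 1)
  let q := (p.map φ.toHom).copy hstart hend
  have hp : p.IsPath := hc.isPath_drop s.succ_pos
  have hq : q.IsPath := (Walk.isPath_copy ..).2 (hp.map φ.injective)
  have hpq : p ≠ q := fun heq => hz.2 <| by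
    have hsnd : p.getVert 1 = q.getVert 1 := by rw [← heq]
    simpa [p, q, hnext, add_assoc] using hsnd.symm
  obtain ⟨_, -, -, d, hd, hlen⟩ := hp.exists_isCycle_length_le_add_of_ne hq hpq
  refine (egirth_le_length hd).trans (Nat.cast_le.2 ?_)
  simpa [p, q, two_mul] using hlen

theorem two_mul_le_egirth_add_two (ht : IsNArcTransitive G s)
    (hG : ∀ v, 2 < (G.neighborSet v).encard) : 2 * (s : ℕ∞) ≤ G.egirth + 2 := by
  by_cases hacyclic : G.IsAcyclic
  · simp [hacyclic.egirth_eq_top]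
  obtain ⟨_, c, hc, hgirth⟩ := exists_egirth_eq_length.2 hacyclic
  have hthree := hc.three_le_length
  have hbound : ∀ k ≤ c.length, IsNArcTransitive G k → 2 * k ≤ c.length + 2
    | 0, _, _ => by omega
    | 1, _, _ => by omega
    | k + 2, hk, htk => by
      have := Nat.cast_le.1 (hgirth ▸ htk.egirth_le_of_isCycle hG hc hk)
      omega
  have hnontrivial (v : V) : (G.neighborSet v).Nontrivial :=
    Set.one_lt_encard_iff_nontrivial.1 ((by norm_num : (1 : ℕ∞) < 2).trans (hG v))
  rw [hgirth]
  norm_cast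
  obtain hle | hlt := le_or_gt s c.length
  · exact hbound s hle ht
  · have := hbound c.length le_rfl (ht.of_le hlt.le hnontrivial)
    omega

theorem succ_of_apply_ne (ht : IsNArcTransitive G (s + 1)) (hx : IsNArc G (s + 2) x)
    (hcubic : (G.neighborSet (x (s + 1))).ncard = 3) {φ : G ≃g G}
    (hfix : ∀ i ≤ s + 1, φ (x i) = x i) (hmove : φ (x (s + 2)) ≠ x (s + 2)) :
    IsNArcTransitive G (s + 2) := by
  have hnext {v : V} (hv : G.Adj (x (s + 1)) v) (hne : x s ≠ v) :
      v = x (s + 2) ∨ v = φ (x (s + 2)) := by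
    have hprev : x s ∈ G.neighborSet (x (s + 1)) := (hx.1 s (by omega)).symm
    have hlast : x (s + 2) ∈ G.neighborSet (x (s + 1)) := hx.1 (s + 1) (by omega)
    have himage : φ (x (s + 2)) ∈ G.neighborSet (x (s + 1)) := by
      simpa [hfix] using φ.map_rel_iff.2 hlast
    have hne_last : x s ≠ x (s + 2) := hx.2 s le_rfl
    have hne_image : x s ≠ φ (x (s + 2)) := by
      simpa [hfix] using φ.injective.ne hne_last
    exact eq_or_eq_of_mem_of_ncard_eq_three hcubic hprev hlast himage hv hne_last hne_image
      hmove.symm hne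
  have hmap (y : ℕ → V) (hy : IsNArc G (s + 2) y) : ∃ ψ : G ≃g G, ∀ i ≤ s + 2, ψ (y i) = x i := by
    obtain ⟨α, hα⟩ := ht y x (hy.mono_s14 (by omega)) (hx.mono_s14 (by omega))
    have hadj : G.Adj (x (s + 1)) (α (y (s + 2))) :=
      hα (s + 1) le_rfl ▸ α.map_rel_iff.2 (hy.1 (s + 1) (by omega))
    have hne : x s ≠ α (y (s + 2)) :=
      hα s (by omega) ▸ α.injective.ne (hy.2 s le_rfl)
    obtain hlast | hlast := hnext hadj hne
    · exact ⟨α, fun i hi => (Nat.le_succ_iff.1 hi).elim (hα i) (by rintro rfl; exact hlast)⟩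
    · refine ⟨α.trans φ.symm, fun i hi => φ.symm_apply_eq.2 ?_⟩
      change α (y i) = φ (x i)
      obtain hi | rfl := Nat.le_succ_iff.1 hi
      · rw [hα i hi, hfix i hi]
      · exact hlast
  intro y z hy hz
  obtain ⟨ψ, hψ⟩ := hmap y hy
  obtain ⟨χ, hχ⟩ := hmap z hz
  exact ⟨ψ.trans χ.symm, fun i hi => χ.symm_apply_eq.2 ((hψ i hi).trans (hχ i hi).symm)⟩

end IsNArcTransitive

/-- An `s`-arc of `G` all of whose vertices are fixed by `f`; the arcs along which rigidity of an
automorphism is propagated. -/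
def IsFixedNArc (G : SimpleGraph V) (f : V → V) (s : ℕ) (x : ℕ → V) : Prop :=
  IsNArc G s x ∧ ∀ i ≤ s, f (x i) = x i

namespace IsFixedNArc

variable {f : V → V}

theorem mono_s14 (hx : IsFixedNArc G f t x) (hst : s ≤ t) : IsFixedNArc G f s x :=
  ⟨hx.1.mono_s14 hst, fun i hi => hx.2 i (hi.trans hst)⟩

theorem tail (hx : IsFixedNArc G f (s + 1) x) : IsFixedNArc G f s fun i => x (i + 1) :=
  ⟨hx.1.tail, fun i hi => hx.2 (i + 1) (by omega)⟩

theorem reverse (hx : IsFixedNArc G f s x) : IsFixedNArc G f s fun i => x (s - i) :=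
  ⟨hx.1.reverse, fun i _ => hx.2 (s - i) (Nat.sub_le s i)⟩

theorem update_succ (hx : IsFixedNArc G f s x)
    (hext : ∀ y, IsNArc G (s + 1) y → IsFixedNArc G f s y → f (y (s + 1)) = y (s + 1))
    (hadj : G.Adj (x s) v) (hne : x (s - 1) ≠ v) :
    IsFixedNArc G f (s + 1) (Function.update x (s + 1) v) := by
  have harc := hx.1.update_succ hadj hne
  have hfix : ∀ i ≤ s, f (Function.update x (s + 1) v i) = Function.update x (s + 1) v i := by
    intro i hi
    rw [Function.update_of_ne (by omega)]
    exact hx.2 i hi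
  refine ⟨harc, fun i hi => ?_⟩
  obtain hi | rfl := Nat.le_succ_iff.1 hi
  · exact hfix i hi
  · exact hext _ harc ⟨harc.mono_s14 s.le_succ, hfix⟩

theorem exists_last_eq_of_adj (hx : IsFixedNArc G f s x)
    (hG : (G.neighborSet (x 0)).Nontrivial)
    (hext : ∀ y, IsNArc G (s + 1) y → IsFixedNArc G f s y → f (y (s + 1)) = y (s + 1))
    (hadj : G.Adj (x s) v) : ∃ y, IsFixedNArc G f s y ∧ y s = v := by
  obtain rfl | hne := eq_or_ne (x (s - 1)) v
  · have hs : s ≠ 0 := by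
      rintro rfl
      exact G.irrefl hadj
    obtain ⟨u, hu, hu_ne⟩ := hG.exists_ne (x 1)
    have hback : IsFixedNArc G f (s + 1) (Function.update (fun i => x (s - i)) (s + 1) u) :=
      hx.reverse.update_succ hext (by simpa using hu)
        (by simpa [Nat.sub_sub_self (Nat.one_le_iff_ne_zero.2 hs)] using hu_ne.symm)
    exact ⟨_, hback.reverse.mono_s14 s.le_succ, by simp [hs]⟩
  · exact ⟨_, (hx.update_succ hext hadj hne).tail, Function.update_self ..⟩

theorem apply_eq_self (hx : IsFixedNArc G f s x) (hconn : G.Preconnected)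
    (hG : ∀ v, (G.neighborSet v).Nontrivial)
    (hext : ∀ y, IsNArc G (s + 1) y → IsFixedNArc G f s y → f (y (s + 1)) = y (s + 1)) (v : V) :
    f v = v := by
  suffices ∃ y, IsFixedNArc G f s y ∧ y s = v by
    obtain ⟨y, hy, rfl⟩ := this
    exact hy.2 s le_rfl
  induction (reachable_iff_reflTransGen (x s) v).1 (hconn _ _) with
  | refl => exact ⟨x, hx, rfl⟩
  | tail _ hadj ih =>
    obtain ⟨y, hy, rfl⟩ := ih
    exact hy.exists_last_eq_of_adj (hG _) hext hadj

end IsFixedNArc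

theorem IsNArcTransitive.isNArcRegular_of_not_succ (ht : IsNArcTransitive G (s + 1))
    (hnot : ¬ IsNArcTransitive G (s + 2)) (hconn : G.Preconnected)
    (hcubic : ∀ v, (G.neighborSet v).ncard = 3) : IsNArcRegular G (s + 1) := by
  have hG (v : V) : (G.neighborSet v).Nontrivial :=
    Set.one_lt_ncard_iff_nontrivial_and_finite.1 (by rw [hcubic v]; norm_num) |>.1
  refine ⟨ht, fun φ x hx hfix => IsFixedNArc.apply_eq_self ⟨hx, hfix⟩ hconn hG ?_⟩
  intro y hy hyfix
  by_contra hmove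
  exact hnot (ht.succ_of_apply_ne hy (hcubic _) hyfix.2 hmove)

end NArc

theorem not_fiveArcRegular_girth_six_general {V : Type*} (Γ : SimpleGraph V)
    (hconn : Γ.Connected) (hcubic : ∀ v : V, (Γ.neighborSet v).ncard = 3) {g : ℕ}
    (hgirth : Γ.egirth = g) :
    (∀ s, g + 2 < 2 * s → ¬ IsNArcRegular Γ s) ∧
      (IsNArcTransitive Γ 1 → ∃ s, 2 * s ≤ g + 2 ∧ IsNArcRegular Γ s) := by
  have hdeg (v : V) : 2 < (Γ.neighborSet v).encard := by
    rw [← (Set.finite_of_ncard_ne_zero (by simp [hcubic v])).cast_ncard_eq, hcubic v]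
    norm_num
  have htutte (s : ℕ) (hs : IsNArcTransitive Γ s) : 2 * s ≤ g + 2 := by
    exact_mod_cast hgirth ▸ hs.two_mul_le_egirth_add_two hdeg
  refine ⟨fun s hlt hreg => (htutte s hreg.1).not_gt hlt, fun hone => ?_⟩
  obtain ⟨s, hs, hnot⟩ : ∃ s, IsNArcTransitive Γ (s + 1) ∧ ¬ IsNArcTransitive Γ (s + 2) := by
    by_contra! hsucc
    have := htutte (g + 2 + 1) (Nat.rec hone hsucc (g + 2))
    omega
  exact ⟨s + 1, htutte _ hs, hs.isNArcRegular_of_not_succ hnot hconn.preconnected hcubic⟩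

/-- No connected cubic graph of girth 6 is 5-arc-regular; that is, every connected cubic
arc-transitive graph of girth 6 is `s`-arc-regular for some `s ≤ 4`. -/
theorem not_fiveArcRegular_girth_six
    {V : Type*} (Γ : SimpleGraph V)
    (hconn : Γ.Connected)
    (hcubic : ∀ v : V, (Γ.neighborSet v).ncard = 3)
    (hgirth : Γ.egirth = 6) :
    ¬ IsNArcRegular Γ 5 ∧ (IsNArcTransitive Γ 1 → ∃ s ≤ 4, IsNArcRegular Γ s) := by
  obtain ⟨hnot, hexists⟩ := not_fiveArcRegular_girth_six_general Γ hconn hcubic (g := 6) hgirth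
  exact ⟨hnot 5 (by norm_num), fun hone => (hexists hone).imp fun _ => And.imp_left (by omega)⟩
end
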